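/- arXiv:2511.22960 — 2 statements merged into one kernel-verified Lean document; each statement's English description precedes it below -/
import Mathlib

section
/- Let (X,ρ,μ) be a space of homogeneous type satisfying the weak reverse doubling (WRD) condition and let Ω ⊆ X be an open set satisfying the weak measure density (WMD) condition. Let r : X → (0,∞) be a globally log-Hölder continuous function and let q ∈ (0,∞) satisfy 0 < q < r̃₋ ≤ r̃₊ < ∞, where r̃₋ := ess inf_{x∈X} r(x) and r̃₊ := ess sup_{x∈X} r(x). Then there exist positive constants C and C̃ such that for every measurable f on Ω with inf_{a∈ℝ} ‖f+a‖_{L^{r(·)}(Ω)} < ∞ and with ‖(∫_Ω |f(·)−f(y)|^q/(U(·,y)·ρ(·,y)^{s₀q}) dμ(y))^{1/q}‖_{L^{r(·)}(Ω)} < ∞ for some s₀ ∈ (0,1), one has C·inf_{a∈ℝ}‖f+a‖_{L^{r(·)}(Ω)} ≤ liminf_{s→0⁺} s^{1/q}‖(∫_Ω |f(·)−f(y)|^q/(U(·,y)·ρ(·,y)^{sq}) dμ(y))^{1/q}‖_{L^{r(·)}(Ω)} ≤ limsup_{s→0⁺} s^{1/q}‖(∫_Ω |f(·)−f(y)|^q/(U(·,y)·ρ(·,y)^{sq})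 dμ(y))^{1/q}‖_{L^{r(·)}(Ω)} ≤ C̃·inf_{a∈ℝ}‖f+a‖_{L^{r(·)}(Ω)}. -/
noncomputable section

open MeasureTheory Filter Set
open scoped ENNReal NNReal Topology

namespace Paper

variable {X : Type*} [MeasurableSpace X]

/-- The ball with center `x` and radius `r` for the quasi-metric `ρ`. -/
def ball (ρ : X → X → ℝ) (x : X) (r : ℝ) : Set X := {y | ρ x y < r}

/-- `(X, ρ, μ)` is a quasi-metric measure space with quasi-triangle constant `K₀`:
`ρ` is a quasi-metric with constant `K₀` and all `ρ`-balls are `μ`-measurable. -/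
structure IsQuasiMetricMeasure (ρ : X → X → ℝ) (μ : Measure X) (K₀ : ℝ) : Prop where
  nonneg : ∀ x y, 0 ≤ ρ x y
  eq_zero_iff : ∀ x y, ρ x y = 0 ↔ x = y
  symm : ∀ x y, ρ x y = ρ y x
  one_le : 1 ≤ K₀
  triangle : ∀ x y z, ρ x z ≤ K₀ * (ρ x y + ρ y z)
  measurableSet_ball : ∀ x r, MeasurableSet (ball ρ x r)

/-- The doubling condition for `μ` with doubling constant `L ∈ [1, ∞)`. -/
def IsDoubling (ρ : X → X → ℝ) (μ : Measure X) (L : ℝ≥0∞) : Prop :=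
  1 ≤ L ∧ L < ∞ ∧ ∀ (x : X) (r : ℝ), 0 < r →
    0 < μ (ball ρ x r) ∧ μ (ball ρ x (2 * r)) ≤ L * μ (ball ρ x r) ∧ μ (ball ρ x r) < ∞

/-- `U(x,y) := min{μ(B(x,ρ(x,y))), μ(B(y,ρ(x,y)))}`. -/
def U (ρ : X → X → ℝ) (μ : Measure X) (x y : X) : ℝ≥0∞ :=
  min (μ (ball ρ x (ρ x y))) (μ (ball ρ y (ρ x y)))

/-- The weak reverse doubling (WRD) condition. -/
def WRD (ρ : X → X → ℝ) (μ : Measure X) : Prop :=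
  ∃ (x₀ : X) (lam C : ℝ), 1 < lam ∧ 1 < C ∧
    ENNReal.ofReal C ≤
      liminf (fun r : ℝ => μ (ball ρ x₀ (lam * r)) / μ (ball ρ x₀ r)) atTop

/-- The weak measure density (WMD) condition for `Ω`. -/
def WMD (ρ : X → X → ℝ) (μ : Measure X) (Ω : Set X) : Prop :=
  ∃ (x₀ : X) (C₀ : ℝ), 0 < C₀ ∧ C₀ ≤ 1 ∧
    ENNReal.ofReal C₀ ≤
      liminf (fun r : ℝ => μ (ball ρ x₀ r ∩ Ω) / μ (ball ρ x₀ r)) atTop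

/-- `Ω` is open with respect to the quasi-metric `ρ`. -/
def IsRhoOpen (ρ : X → X → ℝ) (Ω : Set X) : Prop :=
  ∀ x ∈ Ω, ∃ r : ℝ, 0 < r ∧ ball ρ x r ⊆ Ω

/-- The Maz'ya–Shaposhnikova integrand on a set `E`:
`x ↦ (∫_E |f(x) − f(y)|^q / (U(x,y) ρ(x,y)^{sq}) dμ(y))^{1/q}`. -/
def sob (ρ : X → X → ℝ) (μ : Measure X) (E : Set X) (f : X → ℝ) (q s : ℝ) (x : X) :
    ℝ≥0∞ :=
  (∫⁻ y in E, ENNReal.ofReal |f x - f y| ^ q /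
      (U ρ μ x y * ENNReal.ofReal (ρ x y) ^ (s * q)) ∂μ) ^ (1 / q)

/-- The variable Lebesgue quasi-norm on a set `E` with exponent function `rr`. -/
def vnorm (μ : Measure X) (rr : X → ℝ) (E : Set X) (g : X → ℝ≥0∞) : ℝ≥0∞ :=
  sInf {lam : ℝ≥0∞ | lam ≠ 0 ∧ (∫⁻ x in E, (g x / lam) ^ rr x ∂μ) ≤ 1}

/-- `rr` is globally log-Hölder continuous with respect to `ρ`. -/
def GloballyLogHolder (ρ : X → X → ℝ) (rr : X → ℝ) : Prop :=
  ∃ (x₀ : X) (rlim C : ℝ), 0 < C ∧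
    (∀ x y : X, |rr x - rr y| ≤ C / Real.log (Real.exp 1 + 1 / ρ x y)) ∧
    ∀ x : X, |rr x - rlim| ≤ C / Real.log (Real.exp 1 + ρ x₀ x)

set_option linter.unusedSectionVars false

theorem ball_sub {ρ : X → X → ℝ} {μ : Measure X} {K₀ : ℝ} (hX : IsQuasiMetricMeasure ρ μ K₀)
    {x z : X} {r r' : ℝ} (h : K₀ * (ρ z x + r) ≤ r') : ball ρ x r ⊆ ball ρ z r' := by
  intro y hy
  have hK := hX.one_le
  have h1 := hX.triangle z x y
  simp only [ball, Set.mem_ofPred_eq] at *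
  have : K₀ * (ρ z x + ρ x y) < K₀ * (ρ z x + r) := by
    apply mul_lt_mul_of_pos_left _ (by linarith)
    linarith
  linarith

theorem ball_mono {ρ : X → X → ℝ} {x : X} {r r' : ℝ} (h : r ≤ r') : ball ρ x r ⊆ ball ρ x r' :=
  fun _ hy => lt_of_lt_of_le hy h

theorem dbl {ρ : X → X → ℝ} {μ : Measure X} {L : ℝ≥0∞} (hL : IsDoubling ρ μ L) :
    ∃ n : ℕ, ∀ (x : X) (r M : ℝ), 0 < r → 1 ≤ M →
      μ (ball ρ x (M * r)) ≤ ENNReal.ofReal ((2 * M) ^ n) * μ (ball ρ x r) := by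
  obtain ⟨h1, h2, h3⟩ := hL
  obtain ⟨n, hn⟩ : ∃ n : ℕ, L ≤ 2 ^ n := by
    obtain ⟨n, hn⟩ := ENNReal.exists_nat_gt h2.ne
    refine ⟨n, hn.le.trans ?_⟩
    exact_mod_cast (Nat.lt_two_pow_self).le
  have hit : ∀ (m : ℕ) (x : X) (r : ℝ), 0 < r →
      μ (ball ρ x (2 ^ m * r)) ≤ L ^ m * μ (ball ρ x r) := by
    intro m
    induction m with
    | zero => intro x r hr; simp
    | succ k ih =>
      intro x r hr
      have := (h3 x (2 ^ k * r) (by positivity)).2.1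
      calc μ (ball ρ x (2 ^ (k+1) * r)) = μ (ball ρ x (2 * (2 ^ k * r))) := by
            congr 2; ring
        _ ≤ L * μ (ball ρ x (2 ^ k * r)) := this
        _ ≤ L * (L ^ k * μ (ball ρ x r)) := by gcongr; exact ih x r hr
        _ = L ^ (k+1) * μ (ball ρ x r) := by ring
  refine ⟨n, fun x r M hr hM => ?_⟩
  obtain ⟨m, hm1, hm2⟩ := exists_nat_pow_near hM (by norm_num : (1:ℝ) < 2)
  calc μ (ball ρ x (M * r)) ≤ μ (ball ρ x (2 ^ (m+1) * r)) := by
        apply measure_mono; apply ball_mono; gcongr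
    _ ≤ L ^ (m+1) * μ (ball ρ x r) := hit _ _ _ hr
    _ ≤ _ := by
      gcongr
      calc L ^ (m+1) ≤ (2 ^ n) ^ (m+1) := by gcongr
        _ = ENNReal.ofReal ((2 ^ (m+1)) ^ n) := by
            rw [ENNReal.ofReal_pow (by positivity), ENNReal.ofReal_pow (by positivity), ← pow_mul, ← pow_mul, mul_comm]
            simp
        _ ≤ _ := by
            apply ENNReal.ofReal_le_ofReal
            gcongr
            rw [pow_succ]; linarith

theorem cmp {ρ : X → X → ℝ} {μ : Measure X} {K₀ : ℝ} (hX : IsQuasiMetricMeasure ρ μ K₀) {n : ℕ}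
    (hn : ∀ (x : X) (r M : ℝ), 0 < r → 1 ≤ M →
      μ (ball ρ x (M * r)) ≤ ENNReal.ofReal ((2 * M) ^ n) * μ (ball ρ x r))
    {x z : X} {r r' M : ℝ} (hr : 0 < r') (hM : 1 ≤ M) (h : K₀ * (ρ z x + r) ≤ M * r') :
    μ (ball ρ x r) ≤ ENNReal.ofReal ((2 * M) ^ n) * μ (ball ρ z r') :=
  (measure_mono (ball_sub hX h)).trans (hn z r' M hr hM)

theorem vnorm_le {μ : Measure X} {rr : X → ℝ} {E : Set X} {g : X → ℝ≥0∞} {lam : ℝ≥0∞}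
    (h0 : lam ≠ 0) (h : (∫⁻ x in E, (g x / lam) ^ rr x ∂μ) ≤ 1) : vnorm μ rr E g ≤ lam :=
  sInf_le ⟨h0, h⟩

theorem vnorm_lt {μ : Measure X} {rr : X → ℝ} (hr : ∀ x, 0 < rr x) {E : Set X} {g : X → ℝ≥0∞}
    {lam : ℝ≥0∞} (h : vnorm μ rr E g < lam) : (∫⁻ x in E, (g x / lam) ^ rr x ∂μ) ≤ 1 := by
  obtain ⟨l, ⟨hl0, hl⟩, hlt⟩ := sInf_lt_iff.1 h
  refine le_trans (lintegral_mono fun x => ?_) hl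
  exact ENNReal.rpow_le_rpow (ENNReal.div_le_div_left hlt.le _) (hr x).le

theorem vnorm_congr {μ : Measure X} {rr rr' : X → ℝ} (h : rr =ᵐ[μ] rr') (E : Set X)
    (g : X → ℝ≥0∞) : vnorm μ rr E g = vnorm μ rr' E g := by
  unfold vnorm
  congr 1
  ext lam
  simp only [Set.mem_ofPred_eq]
  rw [lintegral_congr_ae]
  filter_upwards [ae_restrict_of_ae h] with x hx
  rw [hx]

theorem meas_rho {ρ : X → X → ℝ} {μ : Measure X} {K₀ : ℝ} (hX : IsQuasiMetricMeasure ρ μ K₀)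
    (x : X) : Measurable (ρ x) :=
  measurable_of_Iio fun r => hX.measurableSet_ball x r

/-- Fubini-free averaging bound. -/
theorem avg_maj [Nonempty X] {ρ : X → X → ℝ} {μ : Measure X} {K₀ : ℝ} {L : ℝ≥0∞}
    (hX : IsQuasiMetricMeasure ρ μ K₀) (hL : IsDoubling ρ μ L) :
    ∃ A : ℝ≥0∞, A ≠ ∞ ∧ ∀ R : ℝ, 0 < R → ∀ ψ : X → ℝ≥0∞, Measurable ψ →
      ∃ Ψ : X → ℝ≥0∞, Measurable Ψ ∧
        (∀ x, (∫⁻ y in ball ρ x R, ψ y ∂μ) / μ (ball ρ x R) ≤ Ψ x) ∧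
        ∫⁻ x, Ψ x ∂μ ≤ A * ∫⁻ x, ψ x ∂μ := by
  obtain ⟨n, hn⟩ := dbl hL
  have hK := hX.one_le
  have hpos := fun x r hr => (hL.2.2 x r hr).1
  have hfin := fun x r hr => (hL.2.2 x r hr).2.2
  -- constants
  set M : ℝ := 8 * K₀ ^ 4 with hMdef
  have hK2 : 1 ≤ K₀ ^ 2 := by nlinarith
  have hK3 : 1 ≤ K₀ ^ 3 := by nlinarith
  have hK4 : 1 ≤ K₀ ^ 4 := by nlinarith
  have hM : 1 ≤ M := by nlinarith
  set a : ℝ≥0∞ := ENNReal.ofReal ((2 * M) ^ n) with ha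
  have haf : a ≠ ∞ := ENNReal.ofReal_ne_top
  refine ⟨a * (a * a), by finiteness, fun R hR ψ hψ => ?_⟩
  -- maximal separated set
  obtain ⟨S, hS⟩ : ∃ S : Set X, Maximal (fun S : Set X => ∀ x ∈ S, ∀ y ∈ S, x ≠ y → R ≤ ρ x y) S := by
    apply zorn_subset
    intro c hc hchain
    refine ⟨⋃₀ c, ?_, fun s hs => Set.subset_sUnion_of_mem hs⟩
    rintro x ⟨s, hs, hxs⟩ y ⟨t, ht, hyt⟩ hxy
    rcases hchain.total hs ht with h | h
    · exact hc ht x (h hxs) y hyt hxy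
    · exact hc hs x hxs y (h hyt) hxy
  have hcov : ∀ x, ∃ z ∈ S, ρ z x < R := by
    intro x
    by_contra! hcon
    have hx : x ∉ S := fun hxS => by
      have := hcon x hxS
      rw [(hX.eq_zero_iff x x).2 rfl] at this
      linarith
    apply hx
    refine hS.2 (y := insert x S) ?_ (Set.subset_insert _ _) (Set.mem_insert _ _)
    intro u hu v hv huv
    rcases hu with rfl | hu <;> rcases hv with rfl | hv
    · exact absurd rfl huv
    · rw [hX.symm]; exact hcon v hv
    · exact hcon u hu
    · exact hS.1 u hu v hv huv
  -- small disjoint balls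
  set d : ℝ := R / (2 * K₀) with hd
  have hd0 : 0 < d := by positivity
  have hdR : 2 * K₀ * d = R := by rw [hd]; field_simp
  have hdisj : Pairwise (Function.onFun Disjoint fun z : S => ball ρ (z:X) d) := by
    intro u v huv
    rw [Function.onFun, Set.disjoint_left]
    intro y hyu hyv
    have h1 := hS.1 u u.2 v v.2 (fun h => huv (Subtype.ext h))
    have h2 := hX.triangle u y v
    rw [hX.symm y v] at h2
    simp only [ball, Set.mem_ofPred_eq] at hyu hyv
    nlinarith
  -- overlap
  have hover : ∀ (T : ℝ) (y : X), 0 < T → ∑' z : S, (ball ρ (z:X) T).indicator (1 : X → ℝ≥0∞) y ≤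
      ENNReal.ofReal ((2 * max 1 (2 * K₀ ^ 2 * (T + d) / d)) ^ n) := by
    intro T y hT
    set B := ball ρ y (K₀ * (T + d)) with hB
    have hBpos : μ B ≠ 0 := (hpos y _ (by positivity)).ne'
    have hBfin : μ B ≠ ∞ := (hfin y _ (by positivity)).ne
    set Q := ENNReal.ofReal ((2 * max 1 (2 * K₀ ^ 2 * (T + d) / d)) ^ n) with hQ
    have h1 : ∑' z : S, (ball ρ (z:X) T).indicator (1 : X → ℝ≥0∞) y * μ B ≤
        ∑' z : S, Q * μ (ball ρ (z:X) d ∩ B) := by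
      apply ENNReal.tsum_le_tsum
      intro z
      by_cases hz : y ∈ ball ρ (z:X) T
      · rw [Set.indicator_of_mem hz]
        simp only [Pi.one_apply, one_mul]
        have hz' : ρ z y < T := hz
        have hsub : ball ρ (z:X) d ⊆ B := by
          apply ball_sub hX
          rw [hX.symm y z]
          gcongr
        rw [Set.inter_eq_left.2 hsub]
        apply cmp hX hn hd0 (le_max_left _ _)
        calc K₀ * (ρ z y + K₀ * (T + d)) ≤ K₀ * (K₀ * (T + d) + K₀ * (T + d)) := by
              gcongr
              nlinarith
          _ = 2 * K₀ ^ 2 * (T + d) / d * d := by field_simp; ring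
          _ ≤ _ := by gcongr; exact le_max_right _ _
      · rw [Set.indicator_of_notMem hz]; simp
    rw [ENNReal.tsum_mul_right, ENNReal.tsum_mul_left] at h1
    have h2 : ∑' z : S, μ (ball ρ (z:X) d ∩ B) ≤ μ B := by
      refine (tsum_meas_le_meas_iUnion_of_disjoint μ
        (fun z => (hX.measurableSet_ball _ _).inter (hX.measurableSet_ball _ _)) ?_).trans
        (measure_mono (Set.iUnion_subset fun z => Set.inter_subset_right))
      exact fun u v huv => (hdisj huv).mono Set.inter_subset_left Set.inter_subset_left
    have h3 := h1.trans (mul_le_mul_right h2 Q)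
    exact (ENNReal.mul_le_mul_iff_left hBpos hBfin).1 h3
  -- countability
  have hScount : Countable S := by
    obtain ⟨o⟩ := ‹Nonempty X›
    have hc : ∀ k : ℕ, ({z : S | ρ (z:X) o < (k:ℝ) + 1} : Set S).Countable := by
      intro k
      have h1 := hover ((k:ℝ)+1) o (by positivity)
      have h2 := Summable.countable_support_ennreal (f := fun z : S => (ball ρ (z:X) ((k:ℝ)+1)).indicator (1 : X → ℝ≥0∞) o)
        (h1.trans_lt ENNReal.ofReal_lt_top).ne
      refine h2.mono ?_
      intro z hz
      rw [Function.mem_support, Set.indicator_of_mem (show o ∈ ball ρ (z:X) ((k:ℝ)+1) from hz)]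
      simp
    have : (Set.univ : Set S) = ⋃ k : ℕ, {z : S | ρ (z:X) o < (k:ℝ) + 1} := by
      symm; rw [Set.eq_univ_iff_forall]
      intro z
      obtain ⟨k, hk⟩ := exists_nat_gt (ρ z o)
      exact Set.mem_iUnion.2 ⟨k, by simp only [Set.mem_ofPred_eq]; linarith⟩
    rw [← Set.countable_univ_iff, this]
    exact Set.countable_iUnion hc
  set R' : ℝ := 2 * K₀ * R with hR'
  refine ⟨fun x => ∑' z : S, (ball ρ (z:X) R).indicator
    (fun _ => a * ((∫⁻ y in ball ρ (z:X) R', ψ y ∂μ) / μ (ball ρ (z:X) R))) x, ?_, ?_, ?_⟩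
  · apply Measurable.tsum
    intro z
    exact measurable_const.indicator (hX.measurableSet_ball _ _)
  · intro x
    obtain ⟨z, hzS, hz⟩ := hcov x
    refine le_trans ?_ (ENNReal.le_tsum (⟨z, hzS⟩ : S))
    rw [Set.indicator_of_mem (show x ∈ ball ρ z R from hz)]
    have h1 : ball ρ x R ⊆ ball ρ z R' := by
      apply ball_sub hX; rw [hR']; nlinarith
    have h2 : μ (ball ρ z R) ≤ a * μ (ball ρ x R) := by
      apply cmp hX hn hR hM
      rw [hX.symm x z, hMdef]
      have hKK : K₀ ≤ K₀ ^ 4 := by nlinarith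
      have : K₀ * (ρ z x + R) ≤ K₀ * (2 * R) := by gcongr; linarith
      have : K₀ * R ≤ K₀ ^ 4 * R := by gcongr
      nlinarith
    calc (∫⁻ y in ball ρ x R, ψ y ∂μ) / μ (ball ρ x R)
        ≤ (∫⁻ y in ball ρ z R', ψ y ∂μ) / μ (ball ρ x R) := by
          gcongr
      _ ≤ (∫⁻ y in ball ρ z R', ψ y ∂μ) / (μ (ball ρ z R) / a) := by
          gcongr
          exact ENNReal.div_le_of_le_mul' h2
      _ = _ := by
          have ha0 : a ≠ 0 := by rw [ha]; simp only [ne_eq, ENNReal.ofReal_eq_zero, not_le]; positivity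
          rw [div_eq_mul_inv, ENNReal.inv_div (Or.inl haf) (Or.inl ha0)]
          simp only [div_eq_mul_inv]; ring
  · rw [lintegral_tsum (fun z => (measurable_const.indicator (hX.measurableSet_ball _ _)).aemeasurable)]
    calc ∑' z : S, ∫⁻ x, (ball ρ (z:X) R).indicator
          (fun _ => a * ((∫⁻ y in ball ρ (z:X) R', ψ y ∂μ) / μ (ball ρ (z:X) R))) x ∂μ
        = ∑' z : S, a * ∫⁻ y, (ball ρ (z:X) R').indicator 1 y * ψ y ∂μ := by
          congr 1; ext z
          rw [lintegral_indicator_const (hX.measurableSet_ball _ _), mul_assoc,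
            ENNReal.div_mul_cancel (hpos z R hR).ne' (hfin z R hR).ne,
            ← lintegral_indicator (hX.measurableSet_ball _ _)]
          congr 2; ext y
          by_cases hy : y ∈ ball ρ (z:X) R' <;> simp [hy]
      _ = a * ∫⁻ y, (∑' z : S, (ball ρ (z:X) R').indicator 1 y) * ψ y ∂μ := by
          rw [ENNReal.tsum_mul_left, ← lintegral_tsum]
          · simp_rw [ENNReal.tsum_mul_right]
          · intro z
            exact ((measurable_one.indicator (hX.measurableSet_ball _ _)).mul hψ).aemeasurable
      _ ≤ a * ∫⁻ y, (a * a) * ψ y ∂μ := by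
          gcongr with y
          refine (hover R' y (by positivity)).trans ?_
          rw [ha, ← ENNReal.ofReal_mul (by positivity), ← mul_pow]
          apply ENNReal.ofReal_le_ofReal
          refine pow_le_pow_left₀ (by positivity) ?_ n
          have e1 : 2 * K₀ ^ 2 * (R' + d) / d = 8 * K₀ ^ 4 + 2 * K₀ ^ 2 := by
            rw [hR', ← hdR]; field_simp; ring
          rw [e1]
          have : max 1 (8 * K₀ ^ 4 + 2 * K₀ ^ 2) ≤ 2 * M := by
            apply max_le
            · linarith
            · rw [hMdef]; nlinarith
          nlinarith
      _ = _ := by rw [lintegral_const_mul _ hψ]; ring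

theorem rpow_le_exp {a c u δ k : ℝ} (ha : 1 ≤ a) (hu : 1 ≤ u) (hk : 0 ≤ k) {D : ℝ} (hD : 1 ≤ D)
    (huD : u ≤ D * a ^ k) {P : ℝ} (hδP : |δ| ≤ P) (hδ : |δ| * Real.log a ≤ c) :
    u ^ δ ≤ D ^ P * Real.exp (k * c) := by
  have ha0 : 0 < a := by linarith
  calc u ^ δ ≤ u ^ |δ| := Real.rpow_le_rpow_of_exponent_le hu (le_abs_self _)
    _ ≤ (D * a ^ k) ^ |δ| := Real.rpow_le_rpow (by linarith) huD (abs_nonneg _)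
    _ = D ^ |δ| * a ^ (k * |δ|) := by
        rw [Real.mul_rpow (by linarith) (by positivity), Real.rpow_mul ha0.le]
    _ ≤ D ^ P * Real.exp (k * c) := by
        gcongr
        rw [Real.rpow_def_of_pos ha0]
        apply Real.exp_le_exp.2
        calc Real.log a * (k * |δ|) = k * (|δ| * Real.log a) := by ring
          _ ≤ _ := by gcongr

theorem ptwise {P c D k m : ℝ} (hP : 1 ≤ P) (hD : 1 ≤ D) (hk : 0 ≤ k) (hm : 0 ≤ m) (hc : 0 ≤ c) :
    ∃ A : ℝ, 1 ≤ A ∧ ∀ a b p p' pi t h : ℝ, 1 ≤ a → 1 ≤ b → 1 ≤ p → p ≤ P → 1 ≤ p' → p' ≤ P →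
      1 ≤ pi → pi ≤ P → |p - pi| * Real.log a ≤ c → |p' - pi| * Real.log b ≤ c →
      0 ≤ t → t ≤ D * a ^ k → t ≤ D * b ^ k → 0 ≤ h → a ^ (-m) < t →
      t ^ (p - 1) * h ≤ t ^ p / 2 + A * (h ^ p' + b ^ (-m)) := by
  set E1 := D ^ P * Real.exp (k * c) with hE1
  set E2 := Real.exp (m * c) with hE2
  have hDP : 1 ≤ D ^ P := Real.one_le_rpow hD (by linarith)
  have h1E1 : 1 ≤ E1 := by
    have := Real.one_le_exp (show 0 ≤ k * c by positivity)
    nlinarith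
  have h1E2 : 1 ≤ E2 := Real.one_le_exp (by positivity)
  have h2P : (1:ℝ) ≤ 2 ^ P := Real.one_le_rpow (by norm_num) (by linarith)
  set A1 := E1 * E1 * 2 ^ P with hA1
  set A2 := E2 * E2 * 2 ^ P with hA2
  have h1A1 : 1 ≤ A1 := one_le_mul_of_one_le_of_one_le (one_le_mul_of_one_le_of_one_le h1E1 h1E1) h2P
  have h1A2 : 1 ≤ A2 := one_le_mul_of_one_le_of_one_le (one_le_mul_of_one_le_of_one_le h1E2 h1E2) h2P
  refine ⟨max A1 A2, le_max_of_le_left h1A1, ?_⟩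
  intro a b p p' pi t h ha hb hp hpP hp' hp'P hpi hpiP hpa hpb ht hta htb hh hat
  have ha0 : 0 < a := by linarith
  have hb0 : 0 < b := by linarith
  have ht0 : 0 < t := lt_of_le_of_lt (by positivity) hat
  have hbm : 0 ≤ b ^ (-m) := by positivity
  have hhp : 0 ≤ h ^ p' := by positivity
  have habs : |p - pi| ≤ P := by rw [abs_le]; constructor <;> linarith
  have habs' : |pi - p'| ≤ P := by rw [abs_le]; constructor <;> linarith
  rcases le_or_gt h (t/2) with hht | hht
  · have : t ^ (p-1) * h ≤ t ^ p / 2 := by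
      calc t ^ (p-1) * h ≤ t ^ (p-1) * (t/2) := by gcongr
        _ = t ^ p / 2 := by
          rw [Real.rpow_sub_one ht0.ne']; field_simp
    have : 0 ≤ max A1 A2 * (h ^ p' + b ^ (-m)) := by
      have : 0 ≤ max A1 A2 := le_max_of_le_left (by linarith)
      positivity
    linarith
  have hh0 : 0 < h := by linarith
  have key : ∀ e, 1 ≤ e → e ≤ P → t ^ (e - 1) * h ≤ 2 ^ P * h ^ e := by
    intro e he heP
    calc t ^ (e - 1) * h ≤ (2 * h) ^ (e - 1) * h := by
          gcongr
          linarith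
      _ = 2 ^ (e - 1) * h ^ e := by
          rw [Real.mul_rpow (by norm_num) hh, Real.rpow_sub_one hh0.ne' e]; field_simp
      _ ≤ _ := by
          gcongr
          · norm_num
          · linarith
  suffices hs : t ^ (p - 1) * h ≤ max A1 A2 * (h ^ p' + b ^ (-m)) by
    have : 0 ≤ t ^ p / 2 := by positivity
    linarith
  rcases le_or_gt 1 t with h1 | h1
  · have e1 : t ^ (p - pi) ≤ E1 := rpow_le_exp ha h1 hk hD hta habs hpa
    have e2 : t ^ (pi - p') ≤ E1 := rpow_le_exp hb h1 hk hD htb habs' (by rwa [abs_sub_comm])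
    calc t ^ (p - 1) * h = t ^ (p - pi) * t ^ (pi - p') * (t ^ (p' - 1) * h) := by
          rw [← mul_assoc, ← Real.rpow_add ht0, ← Real.rpow_add ht0]; ring_nf
      _ ≤ E1 * E1 * (2 ^ P * h ^ p') := by
          exact mul_le_mul (mul_le_mul e1 e2 (by positivity) (by positivity)) (key p' hp' hp'P) (by positivity) (by positivity)
      _ = A1 * h ^ p' := by rw [hA1]; ring
      _ ≤ _ := by
        gcongr
        · exact le_max_left _ _
        · linarith
  · have aux : ∀ a' u δ : ℝ, 1 ≤ a' → 0 < u → u ≤ 1 → a' ^ (-m) ≤ u → |δ| * Real.log a' ≤ c → |δ| ≤ P →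
        u ^ δ ≤ E2 := by
      intro a' u δ ha' hu hu1 hau hδ hδP
      have := rpow_le_exp (u := u⁻¹) (δ := -δ) (D := 1) (k := m) (c := c) (P := P) ha' ((one_le_inv₀ hu).2 hu1) hm le_rfl
        (by rw [one_mul]
            rw [inv_le_comm₀ hu (by positivity), ← Real.rpow_neg (by linarith)]; exact hau)
        (by rwa [abs_neg]) (by rwa [abs_neg])
      rwa [Real.one_rpow, one_mul, Real.inv_rpow hu.le, Real.rpow_neg hu.le, inv_inv] at this
    rcases le_or_gt h 1 with hle | hgt
    · have e1 : t ^ (p - pi) ≤ E2 := aux a t _ ha ht0 h1.le hat.le hpa habs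
      have e3 : t ^ (p - 1) * h ≤ E2 * 2 ^ P * h ^ pi := by
        calc t ^ (p - 1) * h = t ^ (p - pi) * (t ^ (pi - 1) * h) := by
              rw [← mul_assoc, ← Real.rpow_add ht0]; ring_nf
          _ ≤ E2 * (2 ^ P * h ^ pi) := by
              exact mul_le_mul e1 (key pi hpi hpiP) (by positivity) (by positivity)
          _ = _ := by ring
      have e4 : h ^ pi ≤ E2 * (h ^ p' + b ^ (-m)) := by
        rcases le_or_gt h (b ^ (-m)) with hb' | hb'
        · have : h ^ pi ≤ h := by
            conv_rhs => rw [← Real.rpow_one h]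
            exact Real.rpow_le_rpow_of_exponent_ge hh0 hle hpi
          nlinarith
        · have e2 : h ^ (pi - p') ≤ E2 := aux b h _ hb hh0 hle hb'.le (by rwa [abs_sub_comm]) habs'
          calc h ^ pi = h ^ (pi - p') * h ^ p' := by rw [← Real.rpow_add hh0]; ring_nf
            _ ≤ E2 * h ^ p' := by gcongr
            _ ≤ _ := by gcongr; linarith
      calc _ ≤ _ := e3
        _ ≤ E2 * 2 ^ P * (E2 * (h ^ p' + b ^ (-m))) := by gcongr
        _ = A2 * (h ^ p' + b ^ (-m)) := by rw [hA2]; ring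
        _ ≤ _ := by gcongr; exact le_max_right _ _
    · calc t ^ (p - 1) * h ≤ 1 * h := by
            gcongr
            exact Real.rpow_le_one ht h1.le (by linarith)
        _ ≤ h ^ p' := by
            rw [one_mul]
            conv_lhs => rw [← Real.rpow_one h]
            exact Real.rpow_le_rpow_of_exponent_le hgt.le hp'
        _ ≤ 1 * (h ^ p' + b ^ (-m)) := by linarith
        _ ≤ _ := by gcongr; exact le_max_of_le_left h1A1

theorem phi_int [Nonempty X] {ρ : X → X → ℝ} {μ : Measure X} {K₀ : ℝ} {L : ℝ≥0∞}
    (hX : IsQuasiMetricMeasure ρ μ K₀) (hL : IsDoubling ρ μ L) (o : X) :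
    ∃ m : ℝ, 0 ≤ m ∧ ∫⁻ x, ENNReal.ofReal ((Real.exp 1 + ρ o x) ^ (-m)) ∂μ ≠ ∞ := by
  obtain ⟨n, hn⟩ := dbl hL
  refine ⟨(n + 1 : ℕ), by positivity, ?_⟩
  have hfin := (hL.2.2 o 1 one_pos).2.2
  have hbound : ∀ x, ENNReal.ofReal ((Real.exp 1 + ρ o x) ^ (-((n + 1 : ℕ):ℝ))) ≤
      ∑' k : ℕ, (ball ρ o (2 ^ k)).indicator (fun _ => ENNReal.ofReal ((2 / 2 ^ k) ^ (n + 1))) x := by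
    intro x
    have h0 := hX.nonneg o x
    have he : 1 ≤ Real.exp 1 := Real.one_le_exp zero_le_one
    obtain ⟨k, hk1, hk2⟩ := exists_nat_pow_near (show 1 ≤ Real.exp 1 + ρ o x by linarith) (by norm_num : (1:ℝ) < 2)
    refine le_trans ?_ (ENNReal.le_tsum (k+1))
    rw [Set.indicator_of_mem (show x ∈ ball ρ o (2 ^ (k+1)) from (by linarith : ρ o x < 2 ^ (k+1)))]
    apply ENNReal.ofReal_le_ofReal
    rw [Real.rpow_neg (by linarith), Real.rpow_natCast, ← inv_pow]
    have : (2:ℝ) / 2 ^ (k+1) = (2 ^ k)⁻¹ := by rw [pow_succ]; field_simp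
    rw [this]
    gcongr
  refine ((lintegral_mono hbound).trans_lt ?_).ne
  rw [lintegral_tsum (fun k => (measurable_const.indicator (hX.measurableSet_ball _ _)).aemeasurable)]
  have hle : ∀ k : ℕ, ∫⁻ x, (ball ρ o (2 ^ k)).indicator (fun _ => ENNReal.ofReal ((2 / 2 ^ k) ^ (n + 1))) x ∂μ
      ≤ (ENNReal.ofReal (2 ^ (2 * n + 1)) * μ (ball ρ o 1)) * (2⁻¹ : ℝ≥0∞) ^ k := by
    intro k
    rw [lintegral_indicator_const (hX.measurableSet_ball _ _)]
    have h1 := hn o 1 (2 ^ k) one_pos (one_le_pow₀ (by norm_num))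
    rw [mul_one] at h1
    calc _ ≤ ENNReal.ofReal ((2 / 2 ^ k) ^ (n + 1)) * (ENNReal.ofReal ((2 * 2 ^ k) ^ n) * μ (ball ρ o 1)) := by gcongr
      _ = ENNReal.ofReal (2 ^ (2 * n + 1) * (2⁻¹) ^ k) * μ (ball ρ o 1) := by
        rw [← mul_assoc, ← ENNReal.ofReal_mul (by positivity)]
        congr 2
        rw [div_pow, mul_pow, inv_pow]
        field_simp
        ring
      _ = _ := by
        rw [ENNReal.ofReal_mul (by positivity), ENNReal.ofReal_pow (by positivity : (0:ℝ) ≤ 2⁻¹),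
          ENNReal.ofReal_inv_of_pos (by norm_num)]
        simp only [ENNReal.ofReal_ofNat]
        ring
  refine (ENNReal.tsum_le_tsum hle).trans_lt ?_
  rw [ENNReal.tsum_mul_left, ENNReal.tsum_geometric]
  apply ENNReal.mul_lt_top (ENNReal.mul_lt_top ENNReal.ofReal_lt_top hfin)
  rw [ENNReal.one_sub_inv_two, inv_inv]
  exact ENNReal.ofNat_lt_top

theorem key_avg [Nonempty X] {ρ : X → X → ℝ} {μ : Measure X} {K₀ : ℝ} {L : ℝ≥0∞}
    (hX : IsQuasiMetricMeasure ρ μ K₀) (hL : IsDoubling ρ μ L) (o : X) {p : X → ℝ}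
    (hpm : Measurable p)
    {P pi c : ℝ} (hp : ∀ x, 1 ≤ p x) (hpP : ∀ x, p x ≤ P) (hpi : 1 ≤ pi) (hpiP : pi ≤ P)
    (hc : 0 ≤ c)
    (hdec : ∀ x, |p x - pi| * Real.log (Real.exp 1 + ρ o x) ≤ c) {m : ℝ} (hm : 0 ≤ m) :
    ∃ A : ℝ≥0∞, A ≠ ∞ ∧ ∀ h : X → ℝ, Measurable h → (∀ x, 0 ≤ h x) →
      ∫⁻ y, ENNReal.ofReal (h y ^ p y) ∂μ ≤ 1 → ∀ R : ℝ, 1 ≤ R → ∀ x,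
      ((∫⁻ y in ball ρ x R, ENNReal.ofReal (h y) ∂μ) / μ (ball ρ x R)) ^ (p x) ≤
        A * ((∫⁻ y in ball ρ x R, (ENNReal.ofReal (h y ^ p y) +
          ENNReal.ofReal ((Real.exp 1 + ρ o y) ^ (-m))) ∂μ) / μ (ball ρ x R)) +
          ENNReal.ofReal ((Real.exp 1 + ρ o x) ^ (-m)) := by
  obtain ⟨n, hn⟩ := dbl hL
  have hK := hX.one_le
  have he : 1 ≤ Real.exp 1 := Real.one_le_exp zero_le_one
  have hV0 := (hL.2.2 o 1 one_pos).1
  have hV0f := (hL.2.2 o 1 one_pos).2.2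
  set v0 := (μ (ball ρ o 1)).toReal with hv0
  have hv0p : 0 < v0 := ENNReal.toReal_pos hV0.ne' hV0f.ne
  set D : ℝ := 1 + (4 * K₀ ^ 2) ^ n / v0 with hD
  have hD1 : 1 ≤ D := by
    have : 0 ≤ (4 * K₀ ^ 2) ^ n / v0 := by positivity
    linarith
  obtain ⟨A, hA1, hA⟩ := ptwise (P := P) (c := c) (D := D) (k := (n:ℝ)) (m := m) (hpi.trans hpiP) hD1
    (by positivity) hm hc
  refine ⟨2 * ENNReal.ofReal A, by finiteness, ?_⟩
  intro h hhm hh0 hint R hR x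
  have hb1 : ∀ y, 1 ≤ Real.exp 1 + ρ o y := fun y => by have := hX.nonneg o y; linarith
  have hBp := (hL.2.2 x R (by linarith)).1
  have hBf := (hL.2.2 x R (by linarith)).2.2
  have hBm := hX.measurableSet_ball x R
  set B := ball ρ x R with hB
  set v := (μ B).toReal with hv
  have hvp : 0 < v := ENNReal.toReal_pos hBp.ne' hBf.ne
  have hvB : μ B = ENNReal.ofReal v := (ENNReal.ofReal_toReal hBf.ne).symm
  set T := ∫⁻ y in B, ENNReal.ofReal (h y) ∂μ with hT
  have hTle : T ≤ μ B + 1 := by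
    calc T ≤ ∫⁻ y in B, (1 + ENNReal.ofReal (h y ^ p y)) ∂μ := by
          apply lintegral_mono
          intro y
          show ENNReal.ofReal (h y) ≤ 1 + ENNReal.ofReal (h y ^ p y)
          rw [← ENNReal.ofReal_one, ← ENNReal.ofReal_add zero_le_one (Real.rpow_nonneg (hh0 y) _)]
          apply ENNReal.ofReal_le_ofReal
          rcases le_or_gt (h y) 1 with h1 | h1
          · have := Real.rpow_nonneg (hh0 y) (p y); linarith
          · have := Real.rpow_le_rpow_of_exponent_le h1.le (hp y)
            rw [Real.rpow_one] at this; linarith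
      _ = μ B + ∫⁻ y in B, ENNReal.ofReal (h y ^ p y) ∂μ := by
          rw [lintegral_add_left measurable_const]; simp
      _ ≤ _ := by
          gcongr
          exact (setLIntegral_le_lintegral _ _).trans hint
  have hTf : T ≠ ∞ := (hTle.trans_lt (by finiteness)).ne
  set t := T.toReal / v with ht
  have hTt : T / μ B = ENNReal.ofReal t := by
    rw [ht, ENNReal.ofReal_div_of_pos hvp, ENNReal.ofReal_toReal hTf, hvB]
  have ht0 : 0 ≤ t := by positivity
  have htb : ∀ y ∈ B, t ≤ D * (Real.exp 1 + ρ o y) ^ (n:ℝ) := by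
    intro y hy
    have hy' : ρ x y < R := hy
    set b := Real.exp 1 + ρ o y with hb
    have hb1' : 1 ≤ b := hb1 y
    have h1 : μ (ball ρ o 1) ≤ ENNReal.ofReal ((2 * (2 * K₀ ^ 2 * b)) ^ n) * μ B := by
      apply cmp hX hn (by linarith)
      · nlinarith
      · have h2 := hX.triangle x y o
        rw [hX.symm y o] at h2
        have h3 : ρ x o ≤ K₀ * (R + ρ o y) := h2.trans (by gcongr)
        have hd := hX.nonneg o y
        have h4 : ρ x o + 1 ≤ K₀ * (R * (2 * b)) := by
          have : R + ρ o y + 1 ≤ R * (2 * b) := by nlinarith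
          nlinarith
        calc K₀ * (ρ x o + 1) ≤ K₀ * (K₀ * (R * (2 * b))) := by gcongr
          _ = _ := by ring
    have h2 : v0 ≤ (4 * K₀ ^ 2) ^ n * b ^ n * v := by
      have := ENNReal.toReal_mono (by finiteness) h1
      rw [ENNReal.toReal_mul, ENNReal.toReal_ofReal (by positivity)] at this
      calc v0 ≤ _ := this
        _ = _ := by rw [← mul_pow, ← hv]; ring_nf
    have h3 : T.toReal ≤ v + 1 := by
      have := ENNReal.toReal_mono (by finiteness) hTle
      rwa [ENNReal.toReal_add hBf.ne (by simp), ENNReal.toReal_one] at this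
    rw [Real.rpow_natCast, ht, div_le_iff₀ hvp, hD]
    have h4 : 1 ≤ (4 * K₀ ^ 2) ^ n / v0 * b ^ n * v := by
      rw [div_mul_eq_mul_div, div_mul_eq_mul_div, le_div_iff₀ hv0p]; linarith
    have h5 : v ≤ b ^ n * v := by
      have := one_le_pow₀ hb1' (n := n)
      nlinarith
    nlinarith
  have hxB : x ∈ B := by
    show ρ x x < R
    rw [(hX.eq_zero_iff x x).2 rfl]; linarith
  rw [hTt, ENNReal.ofReal_rpow_of_nonneg ht0 (by linarith [hp x])]
  rcases le_or_gt t ((Real.exp 1 + ρ o x) ^ (-m)) with hcase | hcase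
  · refine le_add_left ?_
    apply ENNReal.ofReal_le_ofReal
    refine le_trans ?_ hcase
    have ht1 : t ≤ 1 := hcase.trans (Real.rpow_le_one_of_one_le_of_nonpos (hb1 x) (by linarith))
    rcases ht0.eq_or_lt with h0 | h0
    · rw [← h0, Real.zero_rpow (by linarith [hp x])]
    · conv_rhs => rw [← Real.rpow_one t]
      exact Real.rpow_le_rpow_of_exponent_ge h0 ht1 (hp x)
  refine le_add_right ?_
  have hφm : Measurable fun y => ENNReal.ofReal ((Real.exp 1 + ρ o y) ^ (-m)) :=
    ((measurable_const.add (meas_rho hX o)).pow_const _).ennreal_ofReal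
  have hhpm : Measurable fun y => ENNReal.ofReal (h y ^ p y) := (hhm.pow hpm).ennreal_ofReal
  set I := ∫⁻ y in B, (ENNReal.ofReal (h y ^ p y) + ENNReal.ofReal ((Real.exp 1 + ρ o y) ^ (-m))) ∂μ with hI
  have ht0' : 0 < t := lt_of_le_of_lt (Real.rpow_nonneg (by linarith [hb1 x]) _) hcase
  have hmain : ENNReal.ofReal (t ^ (p x - 1)) * T ≤ ENNReal.ofReal (t ^ p x / 2) * μ B + ENNReal.ofReal A * I := by
    rw [hT, ← lintegral_const_mul _ hhm.ennreal_ofReal, hI, ← lintegral_const_mul' _ _ ENNReal.ofReal_ne_top,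
      ← setLIntegral_const, ← lintegral_add_left measurable_const]
    apply setLIntegral_mono' hBm
    intro y hy
    rw [← ENNReal.ofReal_mul (by positivity),
      ← ENNReal.ofReal_add (Real.rpow_nonneg (hh0 y) _) (Real.rpow_nonneg (by linarith [hb1 y]) _),
      ← ENNReal.ofReal_mul (by linarith), ← ENNReal.ofReal_add (by positivity)]
    · apply ENNReal.ofReal_le_ofReal
      exact hA _ _ (p x) (p y) pi t (h y) (hb1 x) (hb1 y) (hp x) (hpP x) (hp y) (hpP y) hpi hpiP (hdec x) (hdec y)
        ht0 (htb x hxB) (htb y hy) (hh0 y) hcase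
    · have := Real.rpow_nonneg (hh0 y) (p y)
      have := Real.rpow_nonneg (show 0 ≤ Real.exp 1 + ρ o y by linarith [hb1 y]) (-m)
      have : 0 ≤ A := by linarith
      positivity
  have hTv : T = ENNReal.ofReal t * μ B := by
    rw [← hTt, ENNReal.div_mul_cancel hBp.ne' hBf.ne]
  have e1 : ENNReal.ofReal (t ^ (p x - 1)) * T = ENNReal.ofReal (t ^ p x / 2) * μ B + ENNReal.ofReal (t ^ p x / 2) * μ B := by
    rw [hTv, ← mul_assoc, ← ENNReal.ofReal_mul (by positivity), ← add_mul, ← ENNReal.ofReal_add (by positivity) (by positivity)]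
    congr 2
    rw [Real.rpow_sub_one ht0'.ne']; field_simp; norm_num
  rw [e1] at hmain
  have h2 := (ENNReal.add_le_add_iff_left (by finiteness)).1 hmain
  have h3 : ENNReal.ofReal (t ^ p x / 2) ≤ ENNReal.ofReal A * I / μ B :=
    (ENNReal.le_div_iff_mul_le (Or.inl hBp.ne') (Or.inl hBf.ne)).2 h2
  calc ENNReal.ofReal (t ^ p x) = 2 * ENNReal.ofReal (t ^ p x / 2) := by
        rw [show (2:ℝ≥0∞) = ENNReal.ofReal 2 by simp, ← ENNReal.ofReal_mul (by norm_num)]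
        congr 1; ring
    _ ≤ 2 * (ENNReal.ofReal A * I / μ B) := by gcongr
    _ = _ := by simp only [div_eq_mul_inv]; ring

theorem annuli {ρ : X → X → ℝ} {μ : Measure X} {K₀ : ℝ} {L : ℝ≥0∞}
    (hX : IsQuasiMetricMeasure ρ μ K₀) (hL : IsDoubling ρ μ L) (hWRD : WRD ρ μ)
    (Ω : Set X) (hWMD : WMD ρ μ Ω) :
    ∃ (o : X) (Λ : ℝ) (c0 : ℝ≥0∞) (r0 : ℝ), 1 < Λ ∧ c0 ≠ 0 ∧ c0 ≠ ∞ ∧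
      (∀ r, r0 ≤ r → c0 * μ (ball ρ o (Λ * r)) ≤ μ (Ω ∩ (ball ρ o (Λ * r) \ ball ρ o r))) ∧
      ∀ N : ℝ≥0∞, N ≠ ∞ → ∃ r1, ∀ r, r1 ≤ r → N ≤ μ (ball ρ o r) := by
  obtain ⟨x1, lam, C, hlam, hC, hlim⟩ := hWRD
  obtain ⟨o, C0, hC0, hC01, hlim'⟩ := hWMD
  have hK := hX.one_le
  have hpos := fun x r hr => (hL.2.2 x r hr).1
  have hfin := fun x r hr => (hL.2.2 x r hr).2.2
  set C1 := (1 + C) / 2 with hC1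
  have hC11 : 1 < C1 := by rw [hC1]; linarith
  have ev1 : ∀ᶠ r : ℝ in atTop, ENNReal.ofReal C1 < μ (ball ρ x1 (lam * r)) / μ (ball ρ x1 r) := by
    refine eventually_lt_of_lt_liminf (lt_of_lt_of_le ?_ hlim)
    rw [ENNReal.ofReal_lt_ofReal_iff (by linarith), hC1]; linarith
  have ev2 : ∀ᶠ r : ℝ in atTop, ENNReal.ofReal (C0/2) < μ (ball ρ o r ∩ Ω) / μ (ball ρ o r) := by
    refine eventually_lt_of_lt_liminf (lt_of_lt_of_le ?_ hlim')
    rw [ENNReal.ofReal_lt_ofReal_iff (by linarith)]; linarith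
  obtain ⟨r1, hr1⟩ := eventually_atTop.1 ev1
  obtain ⟨r2, hr2⟩ := eventually_atTop.1 ev2
  set r3 := max (max r1 r2) (max (ρ x1 o) 1) with hr3
  have h31 : r1 ≤ r3 := (le_max_left _ _).trans (le_max_left _ _)
  have h32 : r2 ≤ r3 := (le_max_right _ _).trans (le_max_left _ _)
  have h33 : ρ x1 o ≤ r3 := (le_max_left _ _).trans (le_max_right _ _)
  have h34 : 1 ≤ r3 := (le_max_right _ _).trans (le_max_right _ _)
  have hit : ∀ (m : ℕ) (r : ℝ), r3 ≤ r → ENNReal.ofReal (C1 ^ m) * μ (ball ρ x1 r) ≤ μ (ball ρ x1 (lam ^ m * r)) := by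
    intro m
    induction m with
    | zero => intro r hr; simp
    | succ k ih =>
      intro r hr
      have hr0 : 0 < r := by linarith
      have h1 : r3 ≤ lam ^ k * r := by
        have := one_le_pow₀ hlam.le (n := k)
        nlinarith
      have h2 := ENNReal.mul_le_of_le_div (hr1 (lam ^ k * r) (h31.trans h1)).le
      calc ENNReal.ofReal (C1 ^ (k+1)) * μ (ball ρ x1 r)
          = ENNReal.ofReal C1 * (ENNReal.ofReal (C1 ^ k) * μ (ball ρ x1 r)) := by
            rw [← mul_assoc, ← ENNReal.ofReal_mul (by linarith), pow_succ, mul_comm C1]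
        _ ≤ ENNReal.ofReal C1 * μ (ball ρ x1 (lam ^ k * r)) := by gcongr; exact ih r hr
        _ ≤ _ := h2
        _ = _ := by congr 2; ring
  obtain ⟨m, hm⟩ := pow_unbounded_of_one_lt (4 / C0) hC11
  have hlm := one_le_pow₀ hlam.le (n := m)
  set Λ := 4 * K₀ ^ 2 * lam ^ m with hΛ
  have hK2 : 1 ≤ K₀ ^ 2 := by nlinarith
  have hΛ1 : 1 < Λ := by rw [hΛ]; nlinarith
  have hG : ∀ r, r3 ≤ r → ENNReal.ofReal (4 / C0) * μ (ball ρ o r) ≤ μ (ball ρ o (Λ * r)) := by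
    intro r hr
    have hr0 : 0 < r := by linarith
    calc ENNReal.ofReal (4 / C0) * μ (ball ρ o r)
        ≤ ENNReal.ofReal (C1 ^ m) * μ (ball ρ x1 (2 * K₀ * r)) := by
          gcongr
          apply ball_sub hX
          nlinarith
      _ ≤ μ (ball ρ x1 (lam ^ m * (2 * K₀ * r))) := hit m _ (by nlinarith)
      _ ≤ _ := by
        apply measure_mono
        apply ball_sub hX
        rw [hX.symm o x1, hΛ]
        have h1 : ρ x1 o ≤ lam ^ m * (2 * K₀ * r) := by
          calc ρ x1 o ≤ 1 * (1 * r) := by linarith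
            _ ≤ _ := by gcongr; linarith
        calc _ ≤ K₀ * (lam ^ m * (2 * K₀ * r) + lam ^ m * (2 * K₀ * r)) := by gcongr
          _ = _ := by ring
  refine ⟨o, Λ, ENNReal.ofReal (C0 / 4), r3, hΛ1, by simpa using hC0, ENNReal.ofReal_ne_top, ?_, ?_⟩
  · intro r hr
    have hr0 : 0 < r := by linarith
    have hΛr : r2 ≤ Λ * r := by nlinarith
    have h1 := ENNReal.mul_le_of_le_div (hr2 _ hΛr).le
    have hVf := hfin o (Λ * r) (by positivity)
    have h2 : μ (ball ρ o r) ≤ ENNReal.ofReal (C0 / 4) * μ (ball ρ o (Λ * r)) := by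
      calc μ (ball ρ o r) = ENNReal.ofReal (C0 / 4) * (ENNReal.ofReal (4 / C0) * μ (ball ρ o r)) := by
            rw [← mul_assoc, ← ENNReal.ofReal_mul (by positivity)]
            rw [show C0 / 4 * (4 / C0) = 1 by field_simp]; simp
        _ ≤ _ := by gcongr; exact hG r hr
    have h3 : μ (ball ρ o (Λ * r) ∩ Ω) ≤ μ (Ω ∩ (ball ρ o (Λ * r) \ ball ρ o r)) + μ (ball ρ o r) := by
      refine le_trans (measure_mono ?_) (measure_union_le _ _)
      intro y hy
      by_cases hyr : y ∈ ball ρ o r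
      · exact Or.inr hyr
      · exact Or.inl ⟨hy.2, hy.1, hyr⟩
    have h4 : ENNReal.ofReal (C0/4) * μ (ball ρ o (Λ * r)) + ENNReal.ofReal (C0/4) * μ (ball ρ o (Λ * r)) ≤
        μ (Ω ∩ (ball ρ o (Λ * r) \ ball ρ o r)) + ENNReal.ofReal (C0/4) * μ (ball ρ o (Λ * r)) := by
      rw [← add_mul, ← ENNReal.ofReal_add (by positivity) (by positivity), show C0/4 + C0/4 = C0/2 by ring]
      exact h1.trans (h3.trans (by gcongr))
    exact (ENNReal.add_le_add_iff_right (by finiteness)).1 h4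
  · intro N hN
    have hit2 : ∀ k : ℕ, 2 ^ k * μ (ball ρ o r3) ≤ μ (ball ρ o (Λ ^ k * r3)) := by
      intro k
      induction k with
      | zero => simp
      | succ k ih =>
        have h1 : r3 ≤ Λ ^ k * r3 := by
          have := one_le_pow₀ hΛ1.le (n := k)
          nlinarith
        calc 2 ^ (k+1) * μ (ball ρ o r3) = 2 * (2 ^ k * μ (ball ρ o r3)) := by ring
          _ ≤ 2 * μ (ball ρ o (Λ ^ k * r3)) := by gcongr
          _ ≤ ENNReal.ofReal (4 / C0) * μ (ball ρ o (Λ ^ k * r3)) := by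
              gcongr
              rw [show (2:ℝ≥0∞) = ENNReal.ofReal 2 by simp]
              apply ENNReal.ofReal_le_ofReal
              rw [le_div_iff₀ hC0]; linarith
          _ ≤ μ (ball ρ o (Λ * (Λ ^ k * r3))) := hG _ h1
          _ = _ := by congr 2; ring
    have hV : μ (ball ρ o r3) ≠ 0 := (hpos o r3 (by linarith)).ne'
    obtain ⟨k, hk⟩ : ∃ k : ℕ, N / μ (ball ρ o r3) ≤ 2 ^ k := by
      obtain ⟨k, hk⟩ := ENNReal.exists_nat_gt (ENNReal.div_lt_top hN hV).ne
      refine ⟨k, hk.le.trans ?_⟩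
      exact_mod_cast (Nat.lt_two_pow_self).le
    refine ⟨Λ ^ k * r3, fun r hr => ?_⟩
    calc N ≤ 2 ^ k * μ (ball ρ o r3) :=
          (ENNReal.div_le_iff_le_mul (Or.inl hV) (Or.inl (hfin o r3 (by linarith)).ne)).1 hk
      _ ≤ _ := hit2 k
      _ ≤ _ := measure_mono (ball_mono hr)

theorem annuli' {ρ : X → X → ℝ} {μ : Measure X} {K₀ : ℝ} {L : ℝ≥0∞}
    (hX : IsQuasiMetricMeasure ρ μ K₀) (hL : IsDoubling ρ μ L) (hWRD : WRD ρ μ)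
    (Ω : Set X) (hWMD : WMD ρ μ Ω) :
    ∃ (o : X) (Λ : ℝ) (c0 : ℝ≥0∞), 1 < Λ ∧ c0 ≠ 0 ∧ c0 ≠ ∞ ∧ ∀ F : Set X, μ F ≠ ∞ →
      ∃ r0, ∀ r, r0 ≤ r →
        c0 * μ (ball ρ o (Λ * r)) ≤ μ ((Ω ∩ (ball ρ o (Λ * r) \ ball ρ o r)) \ F) := by
  obtain ⟨o, Λ, c0, r0, hΛ, h0, hf, h1, h2⟩ := annuli hX hL hWRD Ω hWMD
  refine ⟨o, Λ, c0 / 2, hΛ, by simp [h0], by finiteness, fun F hF => ?_⟩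
  obtain ⟨r1, hr1⟩ := h2 (μ F / (c0 / 2)) (ENNReal.div_lt_top hF (by simp [h0])).ne
  refine ⟨max (max r0 r1) 1, fun r hr => ?_⟩
  have hr0 : r0 ≤ r := (le_max_left _ _).trans ((le_max_left _ _).trans hr)
  have hr1' : r1 ≤ r := (le_max_right _ _).trans ((le_max_left _ _).trans hr)
  have hr1'' : 1 ≤ r := (le_max_right _ _).trans hr
  have hVf := (hL.2.2 o (Λ * r) (by positivity)).2.2
  have e1 := h1 r hr0
  have e2 : μ F ≤ c0 / 2 * μ (ball ρ o (Λ * r)) := by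
    have := hr1 (Λ * r) (by nlinarith)
    rw [mul_comm]
    exact (ENNReal.div_le_iff_le_mul (Or.inl (by simp [h0])) (Or.inl (by finiteness))).1 this
  have e3 := le_measure_sdiff (μ := μ) (s₁ := Ω ∩ (ball ρ o (Λ * r) \ ball ρ o r)) (s₂ := F)
  refine le_trans ?_ e3
  refine ENNReal.le_sub_of_add_le_right hF ?_
  calc _ ≤ c0 / 2 * μ (ball ρ o (Λ * r)) + c0 / 2 * μ (ball ρ o (Λ * r)) := by gcongr
    _ = c0 * μ (ball ρ o (Λ * r)) := by rw [← add_mul, ENNReal.add_halves]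
    _ ≤ _ := e1

theorem lower_pt {ρ : X → X → ℝ} {μ : Measure X} {K₀ : ℝ} {L : ℝ≥0∞}
    (hX : IsQuasiMetricMeasure ρ μ K₀) (hL : IsDoubling ρ μ L) (hWRD : WRD ρ μ)
    (Ω : Set X) (hΩm : MeasurableSet Ω) (hWMD : WMD ρ μ Ω) (q : ℝ) (hq : 0 < q) :
    ∃ (o : X) (c1 : ℝ≥0∞), c1 ≠ 0 ∧ c1 ≠ ∞ ∧ ∀ (f : X → ℝ) (a : ℝ), Measurable f →
      ∀ ε : ℝ, 0 < ε → μ (Ω ∩ {y | ε < |f y + a|}) ≠ ∞ → ∀ R : ℝ,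
      ∃ δ : ℝ, 0 < δ ∧ ∀ s ∈ Ioo 0 δ, ∀ x ∈ ball ρ o R, 2 * ε ≤ |f x + a| →
        c1 * ENNReal.ofReal |f x + a| ^ q ≤ ENNReal.ofReal s * sob ρ μ Ω f q s x ^ q := by
  obtain ⟨o, Λ, c0, hΛ, h0, hf0, hann⟩ := annuli' hX hL hWRD Ω hWMD
  obtain ⟨n, hn⟩ := dbl hL
  have hK := hX.one_le
  have hK2 : 1 ≤ K₀ ^ 2 := by nlinarith
  have hΛ0 : 0 < Λ := by linarith
  have hlog : 0 < Real.log Λ := Real.log_pos hΛ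
  set A := ENNReal.ofReal ((2 * (4 * K₀ ^ 2)) ^ n) with hA
  have hA0 : A ≠ 0 := by
    rw [hA]; simp only [ne_eq, ENNReal.ofReal_eq_zero, not_le]; positivity
  have hAf : A ≠ ∞ := ENNReal.ofReal_ne_top
  set κ := c0 / A with hκ
  set H := ENNReal.ofReal (1 / 2) ^ q with hH
  have hH0 : H ≠ 0 := by rw [hH]; simp
  set J := ENNReal.ofReal (1 / 2 * (1 / (q * Real.log Λ))) with hJ
  have hJ0 : J ≠ 0 := by
    rw [hJ]; simp only [ne_eq, ENNReal.ofReal_eq_zero, not_le]; positivity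
  refine ⟨o, H * κ * J, ?_, ?_, ?_⟩
  · refine mul_ne_zero (mul_ne_zero hH0 ?_) hJ0
    simp [hκ, h0, hAf]
  · have : κ ≠ ∞ := by rw [hκ]; exact (ENNReal.div_lt_top hf0 hA0).ne
    have : H ≠ ∞ := by rw [hH]; exact ENNReal.rpow_ne_top_of_nonneg hq.le ENNReal.ofReal_ne_top
    finiteness
  intro f a hf ε hε hF R
  set F := Ω ∩ {y | ε < |f y + a|} with hFdef
  have hFm : MeasurableSet F := hΩm.inter (measurableSet_lt measurable_const (hf.add_const a).abs)
  obtain ⟨r0, hr0⟩ := hann F hF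
  obtain ⟨k0, hk0⟩ := pow_unbounded_of_one_lt (max r0 R) hΛ
  have hk0r : ∀ j : ℕ, r0 ≤ Λ ^ (k0 + j) := fun j =>
    (le_max_left _ _).trans (hk0.le.trans (pow_le_pow_right₀ hΛ.le (by omega)))
  have hk0R : ∀ j : ℕ, R ≤ Λ ^ (k0 + j) := fun j =>
    (le_max_right _ _).trans (hk0.le.trans (pow_le_pow_right₀ hΛ.le (by omega)))
  set W : ℝ := 2 * K₀ * Λ ^ (k0 + 1) with hW
  have hW0 : 0 < W := by positivity
  obtain ⟨δ, hδ, hδ'⟩ : ∃ δ : ℝ, 0 < δ ∧ ∀ s ∈ Ioo 0 δ, 1 / 2 ≤ W ^ (-(s * q)) := by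
    have hc : Continuous fun s : ℝ => W ^ (-(s * q)) :=
      Continuous.rpow continuous_const (by fun_prop) (fun _ => Or.inl hW0.ne')
    have ht : Tendsto (fun s : ℝ => W ^ (-(s * q))) (𝓝 0) (𝓝 1) := by
      have := hc.tendsto 0
      simpa using this
    have ev := ht.eventually (lt_mem_nhds (by norm_num : (1/2 : ℝ) < 1))
    obtain ⟨δ, hδ, h⟩ := Metric.eventually_nhds_iff.1 ev
    refine ⟨δ, hδ, fun s hs => (h ?_).le⟩
    rw [Real.dist_eq, sub_zero, abs_of_pos hs.1]; exact hs.2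
  refine ⟨δ, hδ, ?_⟩
  intro s hs x hx hgx
  have hs0 := hs.1
  have hx' : ρ o x < R := hx
  -- sets
  set S : ℕ → Set X := fun j => (Ω ∩ (ball ρ o (Λ * Λ ^ (k0 + j)) \ ball ρ o (Λ ^ (k0 + j)))) \ F with hS
  have hSm : ∀ j, MeasurableSet (S j) := fun j =>
    (hΩm.inter ((hX.measurableSet_ball _ _).diff (hX.measurableSet_ball _ _))).diff hFm
  have hSd : Pairwise (Function.onFun Disjoint S) := by
    have aux : ∀ i j, i < j → Disjoint (S i) (S j) := by
      intro i j hij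
      rw [Set.disjoint_left]
      rintro y ⟨⟨_, h1, _⟩, _⟩ ⟨⟨_, _, h2⟩, _⟩
      apply h2
      refine ball_mono ?_ h1
      rw [← pow_succ']
      exact pow_le_pow_right₀ hΛ.le (by omega)
    intro i j hij
    rcases lt_or_gt_of_ne hij with h | h
    · exact aux i j h
    · exact (aux j i h).symm
  set G := ENNReal.ofReal |f x + a| ^ q with hG
  set θ := Λ ^ (-(s * q)) with hθ
  have hθ0 : 0 < θ := by positivity
  have hpiece : ∀ j, H * G * κ * (ENNReal.ofReal (W ^ (-(s * q))) * ENNReal.ofReal θ ^ j) ≤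
      ∫⁻ y in S j, ENNReal.ofReal |f x - f y| ^ q / (U ρ μ x y * ENNReal.ofReal (ρ x y) ^ (s * q)) ∂μ := by
    intro j
    set r := Λ ^ (k0 + j) with hr
    have hrp : 0 < r := by positivity
    have hRr : R ≤ r := hk0R j
    have hVp := (hL.2.2 o (Λ * r) (by positivity)).1
    have hVf := (hL.2.2 o (Λ * r) (by positivity)).2.2
    set V := μ (ball ρ o (Λ * r)) with hV
    have hlow : ∀ y ∈ S j, H * G / (A * V * ENNReal.ofReal (2 * K₀ * (Λ * r)) ^ (s * q)) ≤
        ENNReal.ofReal |f x - f y| ^ q / (U ρ μ x y * ENNReal.ofReal (ρ x y) ^ (s * q)) := by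
      rintro y ⟨⟨hyΩ, hy1, hy2⟩, hyF⟩
      have hgy : |f y + a| ≤ ε := by
        by_contra hcon
        exact hyF ⟨hyΩ, not_le.1 hcon⟩
      have hy1' : ρ o y < Λ * r := hy1
      have hrΛ : r ≤ Λ * r := by nlinarith
      have hxy : ρ x y ≤ 2 * K₀ * (Λ * r) := by
        have := hX.triangle x o y
        rw [hX.symm x o] at this
        nlinarith
      apply ENNReal.div_le_div
      · rw [hH, hG, ← ENNReal.mul_rpow_of_nonneg _ _ hq.le, ← ENNReal.ofReal_mul (by norm_num)]
        gcongr
        have h1 : |f x + a| - |f y + a| ≤ |(f x + a) - (f y + a)| := abs_sub_abs_le_abs_sub _ _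
        rw [show (f x + a) - (f y + a) = f x - f y by ring] at h1
        linarith
      · gcongr
        refine (min_le_left _ _).trans ?_
        refine (measure_mono (ball_mono hxy)).trans ?_
        apply cmp hX hn (by positivity) (by linarith)
        have : ρ o x ≤ K₀ * (Λ * r) := by nlinarith
        calc K₀ * (ρ o x + 2 * K₀ * (Λ * r)) ≤ K₀ * (K₀ * (Λ * r) + 2 * K₀ * (Λ * r)) := by gcongr
          _ = 3 * (K₀ ^ 2 * (Λ * r)) := by ring
          _ ≤ 4 * (K₀ ^ 2 * (Λ * r)) := by gcongr; norm_num
          _ = _ := by ring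
    have hW2 : 0 < 2 * K₀ * (Λ * r) := by positivity
    have epow : (ENNReal.ofReal (2 * K₀ * (Λ * r)) ^ (s * q))⁻¹ = ENNReal.ofReal (W ^ (-(s * q))) * ENNReal.ofReal θ ^ j := by
      rw [← ENNReal.rpow_neg, ENNReal.ofReal_rpow_of_pos hW2, ← ENNReal.ofReal_pow hθ0.le,
        ← ENNReal.ofReal_mul (by positivity)]
      congr 1
      rw [hθ, ← Real.rpow_natCast, ← Real.rpow_mul hΛ0.le, mul_comm _ (j:ℝ), Real.rpow_mul hΛ0.le,
        Real.rpow_natCast, ← Real.mul_rpow (by positivity) (by positivity)]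
      congr 1
      rw [hW, hr, pow_add, pow_succ]; ring
    calc H * G * κ * (ENNReal.ofReal (W ^ (-(s * q))) * ENNReal.ofReal θ ^ j)
        = H * G / (A * V * ENNReal.ofReal (2 * K₀ * (Λ * r)) ^ (s * q)) * (c0 * V) := by
          have hpf : ENNReal.ofReal (2 * K₀ * (Λ * r)) ^ (s * q) ≠ ∞ :=
            ENNReal.rpow_ne_top_of_nonneg (by positivity) ENNReal.ofReal_ne_top
          rw [← epow, hκ, div_eq_mul_inv, div_eq_mul_inv, ENNReal.mul_inv (Or.inl (mul_ne_zero hA0 hVp.ne')) (Or.inr ?_),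
            ENNReal.mul_inv (Or.inl hA0) (Or.inl hAf)]
          · have : V⁻¹ * V = 1 := ENNReal.inv_mul_cancel hVp.ne' hVf.ne
            calc _ = H * G * c0 * A⁻¹ * (ENNReal.ofReal (2 * K₀ * (Λ * r)) ^ (s * q))⁻¹ * 1 := by ring
              _ = _ := by rw [← this]; ring
          · exact (ENNReal.rpow_pos (by simpa using hW2) ENNReal.ofReal_ne_top).ne'
      _ ≤ H * G / (A * V * ENNReal.ofReal (2 * K₀ * (Λ * r)) ^ (s * q)) * μ (S j) := by
          gcongr
          exact hr0 r (hk0r j)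
      _ = ∫⁻ y in S j, H * G / (A * V * ENNReal.ofReal (2 * K₀ * (Λ * r)) ^ (s * q)) ∂μ := by
          rw [setLIntegral_const]
      _ ≤ _ := setLIntegral_mono' (hSm j) hlow
  have hsob : sob ρ μ Ω f q s x ^ q =
      ∫⁻ y in Ω, ENNReal.ofReal |f x - f y| ^ q / (U ρ μ x y * ENNReal.ofReal (ρ x y) ^ (s * q)) ∂μ := by
    rw [sob, ← ENNReal.rpow_mul, one_div, inv_mul_cancel₀ hq.ne', ENNReal.rpow_one]
  have hsum : H * G * κ * ENNReal.ofReal (W ^ (-(s * q))) * ∑' j : ℕ, ENNReal.ofReal θ ^ j ≤ sob ρ μ Ω f q s x ^ q := by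
    rw [hsob]
    calc _ = ∑' j : ℕ, H * G * κ * (ENNReal.ofReal (W ^ (-(s * q))) * ENNReal.ofReal θ ^ j) := by
          rw [← ENNReal.tsum_mul_left]; congr 1; ext j; ring
      _ ≤ ∑' j, ∫⁻ y in S j, ENNReal.ofReal |f x - f y| ^ q / (U ρ μ x y * ENNReal.ofReal (ρ x y) ^ (s * q)) ∂μ :=
          ENNReal.tsum_le_tsum hpiece
      _ = ∫⁻ y in ⋃ j, S j, ENNReal.ofReal |f x - f y| ^ q / (U ρ μ x y * ENNReal.ofReal (ρ x y) ^ (s * q)) ∂μ :=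
          (lintegral_iUnion hSm hSd _).symm
      _ ≤ _ := lintegral_mono_set (Set.iUnion_subset fun j y hy => hy.1.1)
  have hgeo : ENNReal.ofReal (1 / (q * Real.log Λ)) ≤ ENNReal.ofReal s * ∑' j : ℕ, ENNReal.ofReal θ ^ j := by
    have hθ1 : θ < 1 := Real.rpow_lt_one_of_one_lt_of_neg hΛ (by nlinarith)
    have hθe : θ = Real.exp (-(s * q * Real.log Λ)) := by
      rw [hθ, Real.rpow_def_of_pos hΛ0]; congr 1; ring
    rw [ENNReal.tsum_geometric, ← ENNReal.ofReal_one, ← ENNReal.ofReal_sub _ hθ0.le,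
      ← ENNReal.ofReal_inv_of_pos (by linarith), ← ENNReal.ofReal_mul hs0.le]
    apply ENNReal.ofReal_le_ofReal
    rw [← div_eq_mul_inv, div_le_div_iff₀ (by positivity) (by linarith)]
    have := Real.add_one_le_exp (-(s * q * Real.log Λ))
    rw [← hθe] at this
    linarith
  calc H * κ * J * G
      = H * G * κ * ENNReal.ofReal (1/2) * ENNReal.ofReal (1 / (q * Real.log Λ)) := by
        rw [hJ, ENNReal.ofReal_mul (by norm_num)]; ring
    _ ≤ H * G * κ * ENNReal.ofReal (W ^ (-(s * q))) * (ENNReal.ofReal s * ∑' j : ℕ, ENNReal.ofReal θ ^ j) := by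
        gcongr
        exact hδ' s hs
    _ = ENNReal.ofReal s * (H * G * κ * ENNReal.ofReal (W ^ (-(s * q))) * ∑' j : ℕ, ENNReal.ofReal θ ^ j) := by ring
    _ ≤ _ := by gcongr

theorem lower {ρ : X → X → ℝ} {μ : Measure X} {K₀ : ℝ} {L : ℝ≥0∞}
    (hX : IsQuasiMetricMeasure ρ μ K₀) (hL : IsDoubling ρ μ L) (hWRD : WRD ρ μ)
    (Ω : Set X) (hΩm : MeasurableSet Ω) (hWMD : WMD ρ μ Ω) (q : ℝ) (hq : 0 < q)
    (rr : X → ℝ) (hrr : ∀ x, 0 < rr x) (rM : ℝ) (hrM : ∀ x, rr x ≤ rM) :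
    ∃ C : ℝ≥0, 0 < C ∧ ∀ (f : X → ℝ) (a : ℝ), Measurable f →
      vnorm μ rr Ω (fun x => ENNReal.ofReal |f x + a|) < ∞ →
      (C : ℝ≥0∞) * vnorm μ rr Ω (fun x => ENNReal.ofReal |f x + a|) ≤
        liminf (fun s : ℝ => ENNReal.ofReal s ^ (1 / q) * vnorm μ rr Ω (sob ρ μ Ω f q s))
              (𝓝[>] (0:ℝ)) := by
  obtain ⟨o, c1, h0, hf1, hmain⟩ := lower_pt hX hL hWRD Ω hΩm hWMD q hq
  set c := c1 ^ (1 / q) with hc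
  have hc0 : c ≠ 0 := by rw [hc]; exact (ENNReal.rpow_pos (pos_iff_ne_zero.2 h0) hf1).ne'
  have hcf : c ≠ ∞ := ENNReal.rpow_ne_top_of_nonneg (by positivity) hf1
  refine ⟨c.toNNReal, ENNReal.toNNReal_pos hc0 hcf, ?_⟩
  intro f a hf hfin
  rw [ENNReal.coe_toNNReal hcf]
  -- finite measure
  have hF : ∀ ε : ℝ, 0 < ε → μ (Ω ∩ {y | ε < |f y + a|}) ≠ ∞ := by
    intro ε hε
    have hFm : MeasurableSet (Ω ∩ {y | ε < |f y + a|}) :=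
      hΩm.inter (measurableSet_lt measurable_const (hf.add_const a).abs)
    obtain ⟨l, hl1, hl2⟩ := exists_between hfin
    have hint := vnorm_lt hrr hl1
    have hl0 : l ≠ 0 := (lt_of_le_of_lt zero_le hl1).ne'
    set u := min 1 (ENNReal.ofReal ε / l) with hu
    have hu0 : u ≠ 0 := by
      rw [hu]; simp [hl2.ne, hε]
    have hu1 : u ≤ 1 := min_le_left _ _
    have huM : u ^ rM ≠ 0 := (ENNReal.rpow_pos (pos_iff_ne_zero.2 hu0) (hu1.trans_lt ENNReal.one_lt_top).ne).ne'
    have h1 : u ^ rM * μ (Ω ∩ {y | ε < |f y + a|}) ≤ 1 := by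
      rw [← setLIntegral_const]
      refine le_trans (setLIntegral_mono' hFm ?_) ((lintegral_mono_set Set.inter_subset_left).trans hint)
      rintro y ⟨_, hy⟩
      have hy' : ε < |f y + a| := hy
      calc u ^ rM ≤ u ^ rr y := ENNReal.rpow_le_rpow_of_exponent_ge hu1 (hrM y)
        _ ≤ _ := by
          apply ENNReal.rpow_le_rpow _ (hrr y).le
          refine (min_le_right _ _).trans ?_
          gcongr
    intro hcon
    rw [hcon, ENNReal.mul_top huM] at h1
    simp at h1
  apply le_of_forall_gt
  intro lam hlam
  rcases eq_or_ne lam ∞ with rfl | hlf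
  · exact ENNReal.mul_lt_top hcf.lt_top hfin
  obtain ⟨l, hl1, hl2⟩ := exists_between hlam
  refine lt_of_le_of_lt ?_ hl2
  have hl0 : l ≠ 0 := (lt_of_le_of_lt zero_le hl1).ne'
  have hlf' : l ≠ ∞ := (hl2.trans_le le_top).ne
  have hfreq := frequently_lt_of_liminf_lt (h := hl1)
  rw [mul_comm, ← ENNReal.le_div_iff_mul_le (Or.inl hc0) (Or.inl hcf)]
  apply vnorm_le (ENNReal.div_pos hl0 hcf).ne'
  set D : ℕ → Set X := fun n => (Ω ∩ ball ρ o (n + 1)) ∩ {x | 2 * (1 / ((n:ℝ) + 1)) ≤ |f x + a|} with hD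
  have hDm : ∀ n, MeasurableSet (D n) := fun n =>
    (hΩm.inter (hX.measurableSet_ball _ _)).inter (measurableSet_le measurable_const (hf.add_const a).abs)
  have hDmono : Monotone D := by
    intro i j hij x hx
    refine ⟨⟨hx.1.1, ball_mono (by gcongr) hx.1.2⟩, ?_⟩
    have h1 : 2 * (1 / ((i:ℝ) + 1)) ≤ |f x + a| := hx.2
    show 2 * (1 / ((j:ℝ) + 1)) ≤ |f x + a|
    refine le_trans ?_ h1
    gcongr
  have hDn : ∀ n, ∫⁻ x in D n, (ENNReal.ofReal |f x + a| / (l / c)) ^ rr x ∂μ ≤ 1 := by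
    intro n
    obtain ⟨δ, hδ, hδ'⟩ := hmain f a hf (1 / ((n:ℝ)+1)) (by positivity) (hF _ (by positivity)) (n + 1)
    obtain ⟨s, hs1, hs2⟩ := (hfreq.and_eventually (Ioo_mem_nhdsGT hδ)).exists
    have hsp : ENNReal.ofReal s ^ (1 / q) ≠ 0 :=
      (ENNReal.rpow_pos (by simpa using hs2.1) ENNReal.ofReal_ne_top).ne'
    have hsf : ENNReal.ofReal s ^ (1 / q) ≠ ∞ :=
      ENNReal.rpow_ne_top_of_nonneg (by positivity) ENNReal.ofReal_ne_top
    have h1 : vnorm μ rr Ω (sob ρ μ Ω f q s) < l / ENNReal.ofReal s ^ (1 / q) := by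
      rw [ENNReal.lt_div_iff_mul_lt (Or.inl hsp) (Or.inl hsf), mul_comm]; exact hs1
    refine le_trans ?_ (vnorm_lt hrr h1)
    refine le_trans (setLIntegral_mono' (hDm n) ?_) (lintegral_mono_set (s := D n) (t := Ω) fun x hx => hx.1.1)
    intro x hx
    apply ENNReal.rpow_le_rpow _ (hrr x).le
    have h2 := hδ' s hs2 x hx.1.2 hx.2
    have h3 : c * ENNReal.ofReal |f x + a| ≤ ENNReal.ofReal s ^ (1/q) * sob ρ μ Ω f q s x := by
      have := ENNReal.rpow_le_rpow h2 (show 0 ≤ 1 / q by positivity)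
      rw [ENNReal.mul_rpow_of_nonneg _ _ (by positivity), ENNReal.mul_rpow_of_nonneg _ _ (by positivity),
        ← ENNReal.rpow_mul, ← ENNReal.rpow_mul, mul_one_div_cancel hq.ne', ENNReal.rpow_one, ENNReal.rpow_one] at this
      exact this
    have e1 : ∀ z w : ℝ≥0∞, w ≠ 0 → w ≠ ∞ → z / (l / w) = w * z / l := by
      intro z w hw0 hwf
      rw [div_eq_mul_inv, ENNReal.inv_div (Or.inl hwf) (Or.inl hw0)]
      simp only [div_eq_mul_inv]; ring
    rw [e1 _ _ hc0 hcf, e1 _ _ hsp hsf]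
    gcongr
  calc ∫⁻ x in Ω, (ENNReal.ofReal |f x + a| / (l / c)) ^ rr x ∂μ
      ≤ ∫⁻ x in ⋃ n, D n, (ENNReal.ofReal |f x + a| / (l / c)) ^ rr x ∂μ := by
        rw [← lintegral_indicator hΩm, ← lintegral_indicator (MeasurableSet.iUnion hDm)]
        apply lintegral_mono
        intro x
        by_cases hxΩ : x ∈ Ω
        · by_cases hx0 : f x + a = 0
          · simp [hxΩ, hx0, hrr x]
          · have : x ∈ ⋃ n, D n := by
              have hpos : 0 < |f x + a| := abs_pos.2 hx0
              obtain ⟨n, hn⟩ := exists_nat_gt (max (ρ o x) (2 / |f x + a|))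
              refine Set.mem_iUnion.2 ⟨n, ⟨hxΩ, ?_⟩, ?_⟩
              · show ρ o x < n + 1
                have := le_max_left (ρ o x) (2 / |f x + a|); linarith
              · show 2 * (1 / ((n:ℝ) + 1)) ≤ |f x + a|
                have h1 : 2 / |f x + a| < n + 1 := by
                  have := le_max_right (ρ o x) (2 / |f x + a|); linarith
                rw [div_lt_iff₀ hpos] at h1
                rw [mul_one_div, div_le_iff₀ (by positivity)]; linarith
            rw [Set.indicator_of_mem hxΩ, Set.indicator_of_mem this]
        · simp [hxΩ]
    _ = ⨆ n, ∫⁻ x in D n, (ENNReal.ofReal |f x + a| / (l / c)) ^ rr x ∂μ :=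
        setLIntegral_iUnion_of_directed _ (hDmono.directed_le)
    _ ≤ 1 := iSup_le hDn

theorem add_rpow_two {u v : ℝ≥0∞} {p P : ℝ} (hp : 0 ≤ p) (hP : p ≤ P) :
    (u + v) ^ p ≤ (2:ℝ≥0∞) ^ P * (u ^ p + v ^ p) := by
  have h1 : u + v ≤ 2 * max u v := by
    rw [two_mul]; exact add_le_add (le_max_left _ _) (le_max_right _ _)
  calc (u + v) ^ p ≤ (2 * max u v) ^ p := ENNReal.rpow_le_rpow h1 hp
    _ = 2 ^ p * (max u v) ^ p := ENNReal.mul_rpow_of_nonneg _ _ hp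
    _ ≤ 2 ^ P * (u ^ p + v ^ p) := by
      apply mul_le_mul' (ENNReal.rpow_le_rpow_of_exponent_le (by norm_num) hP)
      rcases le_total u v with h | h
      · rw [max_eq_right h]; exact le_add_self
      · rw [max_eq_left h]; exact le_self_add

theorem jensen {w a : ℕ → ℝ≥0∞} (hw : ∑' k, w k ≤ 1) {p : ℝ} (hp : 1 ≤ p) :
    (∑' k, w k * a k) ^ p ≤ ∑' k, w k * a k ^ p := by
  have hp0 : 0 < p := by linarith
  have h1 : ∑' k, w k * a k ≤ (∑' k, w k * a k ^ p) ^ p⁻¹ := by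
    rw [ENNReal.tsum_eq_iSup_sum]
    apply iSup_le
    intro s
    refine (ENNReal.inner_le_weight_mul_Lp_of_nonneg s hp w a).trans ?_
    have h2 : (∑ i ∈ s, w i) ^ (1 - p⁻¹) ≤ 1 := by
      apply ENNReal.rpow_le_one ((ENNReal.sum_le_tsum s).trans hw)
      have := inv_le_one_of_one_le₀ hp
      linarith
    calc _ ≤ 1 * (∑' k, w k * a k ^ p) ^ p⁻¹ := by
          apply mul_le_mul' h2
          exact ENNReal.rpow_le_rpow (ENNReal.sum_le_tsum s) (by positivity)
      _ = _ := one_mul _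
  calc _ ≤ ((∑' k, w k * a k ^ p) ^ p⁻¹) ^ p := ENNReal.rpow_le_rpow h1 hp0.le
    _ = _ := by rw [← ENNReal.rpow_mul, inv_mul_cancel₀ hp0.ne', ENNReal.rpow_one]

theorem vnorm_smul {μ : Measure X} {rr : X → ℝ} {E : Set X} {g : X → ℝ≥0∞} {c : ℝ≥0∞}
    (hc : c ≠ 0) (hc' : c ≠ ∞) :
    vnorm μ rr E (fun x => c * g x) ≤ c * vnorm μ rr E g := by
  rw [mul_comm, ← ENNReal.div_le_iff hc hc']
  apply le_sInf
  rintro l ⟨hl0, hl⟩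
  rw [ENNReal.div_le_iff hc hc', mul_comm]
  apply vnorm_le (mul_ne_zero hc hl0)
  convert hl using 4 with x
  exact ENNReal.mul_div_mul_left _ _ hc hc'

theorem sob_smul {ρ : X → X → ℝ} {μ : Measure X} {E : Set X} {f : X → ℝ} {q s l : ℝ}
    (hq : 0 < q) (hl : 0 < l) :
    sob ρ μ E (fun x => l * f x) q s = fun x => ENNReal.ofReal l * sob ρ μ E f q s x := by
  funext x
  unfold sob
  have : ∀ y, ENNReal.ofReal |l * f x - l * f y| ^ q /
      (U ρ μ x y * ENNReal.ofReal (ρ x y) ^ (s * q)) = ENNReal.ofReal l ^ q * (ENNReal.ofReal |f x - f y| ^ q /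
      (U ρ μ x y * ENNReal.ofReal (ρ x y) ^ (s * q))) := by
    intro y
    rw [← mul_sub, abs_mul, abs_of_pos hl, ENNReal.ofReal_mul hl.le, ENNReal.mul_rpow_of_nonneg _ _ hq.le, mul_div_assoc]
  simp_rw [this]
  rw [lintegral_const_mul' _ _ (ENNReal.rpow_ne_top_of_nonneg hq.le ENNReal.ofReal_ne_top),
    ENNReal.mul_rpow_of_nonneg _ _ (by positivity), ← ENNReal.rpow_mul, mul_one_div_cancel hq.ne', ENNReal.rpow_one]

theorem far_pt {ρ : X → X → ℝ} {μ : Measure X} {K₀ : ℝ} {L : ℝ≥0∞}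
    (hX : IsQuasiMetricMeasure ρ μ K₀) (hL : IsDoubling ρ μ L)
    (Ω : Set X) (hΩm : MeasurableSet Ω) (q : ℝ) (hq : 0 < q) :
    ∃ A : ℝ≥0∞, A ≠ ∞ ∧ ∀ (f : X → ℝ) (a : ℝ) (H : X → ℝ≥0∞),
      (∀ y ∈ Ω, H y = ENNReal.ofReal |f y + a| ^ q) → ∀ x ∈ Ω, ∀ s : ℝ, 0 < s →
      ∫⁻ y in Ω \ ball ρ x 1, ENNReal.ofReal |f x - f y| ^ q /
        (U ρ μ x y * ENNReal.ofReal (ρ x y) ^ (s * q)) ∂μ ≤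
      A * ∑' k : ℕ, ENNReal.ofReal (2 ^ (-(s * q))) ^ k *
        (H x + (∫⁻ y in ball ρ x (2 ^ (k+1)), H y ∂μ) / μ (ball ρ x (2 ^ (k+1)))) := by
  obtain ⟨n, hn⟩ := dbl hL
  have hK := hX.one_le
  set A1 := ENNReal.ofReal ((2 * (3 * K₀)) ^ n) with hA1
  have hA10 : A1 ≠ 0 := by rw [hA1]; simp only [ne_eq, ENNReal.ofReal_eq_zero, not_le]; positivity
  have hA1f : A1 ≠ ∞ := ENNReal.ofReal_ne_top
  refine ⟨2 ^ q * A1, ENNReal.mul_ne_top (by simp [hq.le]) hA1f, ?_⟩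
  intro f a H hH x hx s hs
  have hsub : Ω \ ball ρ x 1 ⊆ ⋃ k : ℕ, Ω ∩ (ball ρ x (2^(k+1)) \ ball ρ x (2^k)) := by
    rintro y ⟨hy, hy1⟩
    have h1 : 1 ≤ ρ x y := not_lt.1 hy1
    obtain ⟨k, hk1, hk2⟩ := exists_nat_pow_near h1 (one_lt_two)
    exact Set.mem_iUnion.2 ⟨k, hy, hk2, not_lt.2 hk1⟩
  refine (lintegral_mono_set hsub).trans ((lintegral_iUnion_le _ _).trans ?_)
  rw [← ENNReal.tsum_mul_left]
  apply ENNReal.tsum_le_tsum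
  intro k
  set B := ball ρ x (2^(k+1)) with hB
  have hμ0 : μ B ≠ 0 := (hL.2.2 x (2^(k+1)) (by positivity)).1.ne'
  have hμf : μ B ≠ ∞ := (hL.2.2 x (2^(k+1)) (by positivity)).2.2.ne
  set θ := ENNReal.ofReal (2 ^ (-(s * q))) with hθ
  have hpt : ∀ y ∈ Ω ∩ (B \ ball ρ x (2^k)), ENNReal.ofReal |f x - f y| ^ q /
        (U ρ μ x y * ENNReal.ofReal (ρ x y) ^ (s * q)) ≤ (2 ^ q * A1 * θ ^ k / μ B) * (H x + H y) := by
    rintro y ⟨hy, hyB, hyk⟩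
    have h1 : (2:ℝ)^k ≤ ρ x y := not_lt.1 hyk
    have h2 : ρ x y < 2^(k+1) := hyB
    have h2k : (0:ℝ) < 2^k := by positivity
    have hpos : 0 < ρ x y := h2k.trans_le h1
    have hnum : ENNReal.ofReal |f x - f y| ^ q ≤ 2 ^ q * (H x + H y) := by
      rw [hH x hx, hH y hy]
      refine le_trans (ENNReal.rpow_le_rpow ?_ hq.le) (add_rpow_two hq.le le_rfl)
      rw [← ENNReal.ofReal_add (abs_nonneg _) (abs_nonneg _)]
      apply ENNReal.ofReal_le_ofReal
      have : f x - f y = (f x + a) - (f y + a) := by ring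
      rw [this]; exact abs_sub _ _
    have hU : μ B ≤ A1 * U ρ μ x y := by
      have e1 : μ B ≤ A1 * μ (ball ρ x (ρ x y)) := by
        apply cmp hX hn hpos (by nlinarith)
        rw [(hX.eq_zero_iff x x).2 rfl, pow_succ]
        nlinarith
      have e2 : μ B ≤ A1 * μ (ball ρ y (ρ x y)) := by
        apply cmp hX hn hpos (by nlinarith)
        rw [hX.symm y x, pow_succ]
        nlinarith
      unfold U
      rcases min_choice (μ (ball ρ x (ρ x y))) (μ (ball ρ y (ρ x y))) with h | h <;> rw [h] <;> assumption
    have hρ : (θ ^ k)⁻¹ ≤ ENNReal.ofReal (ρ x y) ^ (s * q) := by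
      have hsq : 0 < s * q := by positivity
      have : (θ ^ k)⁻¹ = ENNReal.ofReal ((2:ℝ)^k) ^ (s*q) := by
        rw [hθ, ← ENNReal.ofReal_pow (by positivity), ← ENNReal.ofReal_inv_of_pos (by positivity),
          ENNReal.ofReal_rpow_of_pos h2k]
        congr 1
        rw [Real.rpow_neg (by norm_num), inv_pow, inv_inv, ← Real.rpow_natCast, ← Real.rpow_natCast, ← Real.rpow_mul (by norm_num),
          ← Real.rpow_mul (by norm_num), mul_comm]
      rw [this]
      exact ENNReal.rpow_le_rpow (ENNReal.ofReal_le_ofReal h1) hsq.le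
    have hden : μ B / A1 * (θ ^ k)⁻¹ ≤ U ρ μ x y * ENNReal.ofReal (ρ x y) ^ (s * q) := by
      apply mul_le_mul' _ hρ
      rw [ENNReal.div_le_iff hA10 hA1f, mul_comm]; exact hU
    have hθ0 : θ ^ k ≠ 0 := pow_ne_zero _ (by rw [hθ]; simp only [ne_eq, ENNReal.ofReal_eq_zero, not_le]; positivity)
    have hθf : θ ^ k ≠ ∞ := ENNReal.pow_ne_top ENNReal.ofReal_ne_top
    calc _ ≤ (2 ^ q * (H x + H y)) / (μ B / A1 * (θ ^ k)⁻¹) := ENNReal.div_le_div hnum hden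
      _ = _ := by
        rw [div_eq_mul_inv, ENNReal.mul_inv (Or.inr (by simp [hθ0])) (Or.inr (by simp [hθf])),
          inv_inv, ENNReal.inv_div (Or.inl hA1f) (Or.inl hA10)]
        simp only [div_eq_mul_inv]; ring
  have hm : MeasurableSet (Ω ∩ (B \ ball ρ x (2^k))) :=
    hΩm.inter ((hX.measurableSet_ball _ _).diff (hX.measurableSet_ball _ _))
  refine (setLIntegral_mono' hm hpt).trans ?_
  refine (lintegral_mono_set (t := B) fun y hy => hy.2.1).trans ?_
  rw [lintegral_const_mul' _ _ (ENNReal.div_ne_top (ENNReal.mul_ne_top (ENNReal.mul_ne_top (by simp [hq.le]) hA1f) (ENNReal.pow_ne_top ENNReal.ofReal_ne_top)) hμ0),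
    lintegral_add_left measurable_const, setLIntegral_const]
  apply le_of_eq
  have : H x = H x * μ B / μ B := by rw [ENNReal.mul_div_cancel_right hμ0 hμf]
  conv_rhs => rw [this]
  simp only [div_eq_mul_inv]; ring

theorem sob_split {ρ : X → X → ℝ} {μ : Measure X} {K₀ : ℝ} {L : ℝ≥0∞}
    (hX : IsQuasiMetricMeasure ρ μ K₀) (hL : IsDoubling ρ μ L)
    (Ω : Set X) (hΩm : MeasurableSet Ω) (q : ℝ) (hq : 0 < q) :
    ∃ A : ℝ≥0∞, A ≠ ∞ ∧ ∀ (f : X → ℝ) (a : ℝ) (H : X → ℝ≥0∞),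
      (∀ y ∈ Ω, H y = ENNReal.ofReal |f y + a| ^ q) → ∀ x ∈ Ω, ∀ s s₀ : ℝ, 0 < s → s ≤ s₀ → s₀ < 1 →
      ∃ w : ℕ → ℝ≥0∞, w = (fun k => (1 - ENNReal.ofReal (2 ^ (-(s * q)))) * ENNReal.ofReal (2 ^ (-(s * q))) ^ k) ∧
      ENNReal.ofReal s * sob ρ μ Ω f q s x ^ q ≤ ENNReal.ofReal s * sob ρ μ Ω f q s₀ x ^ q +
      A * ∑' k : ℕ, w k *
        (H x + (∫⁻ y in ball ρ x (2 ^ (k+1)), H y ∂μ) / μ (ball ρ x (2 ^ (k+1)))) := by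
  obtain ⟨A, hA, hfar⟩ := far_pt hX hL Ω hΩm q hq
  have hl2 : 0 < Real.log 2 := Real.log_pos one_lt_two
  set b := (1 + q * Real.log 2) / (q * Real.log 2) with hb
  refine ⟨A * ENNReal.ofReal b, ENNReal.mul_ne_top hA ENNReal.ofReal_ne_top, ?_⟩
  intro f a H hH x hx s s₀ hs hss hs1
  refine ⟨_, rfl, ?_⟩
  have e : ∀ t : ℝ, sob ρ μ Ω f q t x ^ q = ∫⁻ y in Ω, ENNReal.ofReal |f x - f y| ^ q /
      (U ρ μ x y * ENNReal.ofReal (ρ x y) ^ (t * q)) ∂μ := by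
    intro t
    unfold sob
    rw [← ENNReal.rpow_mul, one_div_mul_cancel hq.ne', ENNReal.rpow_one]
  rw [e, e]
  set θ := ENNReal.ofReal (2 ^ (-(s * q))) with hθ
  have hB : ENNReal.ofReal s ≤ ENNReal.ofReal b * (1 - θ) := by
    have h1 : (1 - θ) = ENNReal.ofReal (1 - 2 ^ (-(s*q))) := by
      rw [hθ, ENNReal.ofReal_sub _ (by positivity), ENNReal.ofReal_one]
    rw [h1, ← ENNReal.ofReal_mul (by positivity)]
    apply ENNReal.ofReal_le_ofReal
    set u := s * q * Real.log 2 with hu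
    have hu0 : 0 < u := by positivity
    have h2 : (2:ℝ) ^ (-(s*q)) = (Real.exp u)⁻¹ := by
      rw [Real.rpow_def_of_pos (by norm_num), ← Real.exp_neg]; congr 1; rw [hu]; ring
    have h3 : (Real.exp u)⁻¹ ≤ (1 + u)⁻¹ := by
      apply inv_anti₀ (by positivity)
      have := Real.add_one_le_exp u; linarith
    have h4 : u / (1 + u) ≤ 1 - 2 ^ (-(s*q)) := by
      rw [h2]
      have : u / (1+u) = 1 - (1+u)⁻¹ := by field_simp; ring
      rw [this]; linarith
    refine le_trans ?_ (mul_le_mul_of_nonneg_left h4 (by positivity))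
    have h5 : s = u / (q * Real.log 2) := by rw [hu]; field_simp
    have h6 : 1 + u ≤ 1 + q * Real.log 2 := by
      rw [hu]; have : 0 < q * Real.log 2 := by positivity
      nlinarith
    have h7 : 0 < q * Real.log 2 := by positivity
    rw [hb, div_mul_div_comm, le_div_iff₀ (by positivity)]
    have h8 : s * (q * Real.log 2 * (1 + u)) = u * (1 + u) := by rw [hu]; ring
    rw [h8, mul_comm]
    exact mul_le_mul_of_nonneg_right h6 hu0.le
  rw [← lintegral_inter_add_sdiff _ Ω (hX.measurableSet_ball x 1), mul_add]
  apply add_le_add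
  · apply mul_le_mul' le_rfl
    refine le_trans (setLIntegral_mono' (hΩm.inter (hX.measurableSet_ball x 1)) ?_)
      (lintegral_mono_set Set.inter_subset_left)
    rintro y ⟨_, hy⟩
    have hy' : ρ x y < 1 := hy
    apply ENNReal.div_le_div le_rfl
    apply mul_le_mul' le_rfl
    apply ENNReal.rpow_le_rpow_of_exponent_ge
    · rw [← ENNReal.ofReal_one]; exact ENNReal.ofReal_le_ofReal hy'.le
    · gcongr
  · calc _ ≤ (ENNReal.ofReal b * (1 - θ)) * (A * ∑' k : ℕ, θ ^ k *
        (H x + (∫⁻ y in ball ρ x (2 ^ (k+1)), H y ∂μ) / μ (ball ρ x (2 ^ (k+1))))) :=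
          mul_le_mul' hB (hfar f a H hH x hx s hs)
      _ = A * ENNReal.ofReal b * ((1 - θ) * ∑' k : ℕ, θ ^ k *
        (H x + (∫⁻ y in ball ρ x (2 ^ (k+1)), H y ∂μ) / μ (ball ρ x (2 ^ (k+1))))) := by ring
      _ = _ := by
        rw [← ENNReal.tsum_mul_left]
        simp only [mul_assoc]

theorem w_sum {s q : ℝ} (hs : 0 < s) (hq : 0 < q) :
    ∑' k : ℕ, (1 - ENNReal.ofReal (2 ^ (-(s * q)))) * ENNReal.ofReal (2 ^ (-(s * q))) ^ k ≤ 1 := by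
  rw [ENNReal.tsum_mul_left, ENNReal.tsum_geometric]
  exact ENNReal.mul_inv_le_one _

theorem upper_norm [Nonempty X] {ρ : X → X → ℝ} {μ : Measure X} {K₀ : ℝ} {L : ℝ≥0∞}
    (hX : IsQuasiMetricMeasure ρ μ K₀) (hL : IsDoubling ρ μ L)
    (Ω : Set X) (hΩm : MeasurableSet Ω) (q : ℝ) (hq : 0 < q)
    (rr : X → ℝ) (hrrm : Measurable rr) (rm rM : ℝ) (hqm : q ≤ rm) (hrm : ∀ x, rm ≤ rr x) (hrM : ∀ x, rr x ≤ rM)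
    (o : X) (rlim c : ℝ) (hl1 : rm ≤ rlim) (hl2 : rlim ≤ rM) (hc : 0 ≤ c)
    (hdec : ∀ x, |rr x - rlim| * Real.log (Real.exp 1 + ρ o x) ≤ c) :
    ∃ A : ℝ≥0∞, 1 ≤ A ∧ A ≠ ∞ ∧ ∀ (f : X → ℝ) (a : ℝ), Measurable f →
      ∫⁻ x in Ω, ENNReal.ofReal |f x + a| ^ rr x ∂μ ≤ 1 →
      (∃ s₀ ∈ Set.Ioo (0:ℝ) 1, vnorm μ rr Ω (sob ρ μ Ω f q s₀) < ∞) →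
      ∀ᶠ s in 𝓝[>] (0:ℝ), ENNReal.ofReal s ^ (1 / q) * vnorm μ rr Ω (sob ρ μ Ω f q s) ≤ A ^ (1 / q) := by
  obtain ⟨A2, hA2, hsplit⟩ := sob_split hX hL Ω hΩm q hq
  obtain ⟨m, hm, hφ⟩ := phi_int hX hL o
  obtain ⟨Am, hAm, hmaj⟩ := avg_maj hX hL
  have hp1 : ∀ x, 1 ≤ rr x / q := fun x => by rw [le_div_iff₀ hq]; linarith [hrm x]
  have hpP : ∀ x, rr x / q ≤ rM / q := fun x => by gcongr; exact hrM x
  obtain ⟨Ak, hAk, hkey⟩ := key_avg (p := fun x => rr x / q) (P := rM / q) (pi := rlim / q) (c := c / q) (m := m) hX hL o (hrrm.div_const q) hp1 hpP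
    (by rw [le_div_iff₀ hq]; linarith) (by gcongr) (by positivity)
    (fun x => by
      rw [← sub_div, abs_div, abs_of_pos hq, div_mul_eq_mul_div]
      gcongr; exact hdec x) hm
  set P := rM / q with hP
  have hP1 : 1 ≤ P := (hp1 (Classical.arbitrary X)).trans (hpP _)
  set φ : X → ℝ≥0∞ := fun x => ENNReal.ofReal ((Real.exp 1 + ρ o x) ^ (-m)) with hφd
  have hφm : Measurable φ := by
    have := meas_rho hX o
    exact ((this.const_add _).pow_const _).ennreal_ofReal
  set Φ := ∫⁻ x, φ x ∂μ with hΦ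
  set D := (max 1 A2) ^ P with hD
  have h2P : (2:ℝ≥0∞) ^ P ≠ ∞ := by simp
  have hDf : D ≠ ∞ := ENNReal.rpow_ne_top_of_nonneg (by linarith) (by simp [hA2])
  set G := 2 ^ P * (D * (2 ^ P * (1 + (Ak * (Am * (1 + Φ)) + Φ)))) with hG
  have hGf : G ≠ ∞ := by
    have : Φ ≠ ∞ := hφ
    simp only [hG]
    finiteness
  refine ⟨1 + G, le_self_add, by finiteness, ?_⟩
  intro f a hf hmod ⟨s₀, ⟨hs0, hs01⟩, hfin⟩
  -- h
  set h : X → ℝ := Ω.indicator (fun y => |f y + a| ^ q) with hh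
  have hhm : Measurable h := ((hf.add_const a).abs.pow_const q).indicator hΩm
  have hh0 : ∀ x, 0 ≤ h x := fun x => Set.indicator_nonneg (fun y _ => by positivity) x
  set ψ0 : X → ℝ≥0∞ := fun y => ENNReal.ofReal (h y ^ (rr y / q)) with hψ0
  have hψ0m : Measurable ψ0 := (hhm.pow (hrrm.div_const q)).ennreal_ofReal
  have hψ0e : ∀ y ∈ Ω, ψ0 y = ENNReal.ofReal |f y + a| ^ rr y := by
    intro y hy
    have : 0 < rr y := by linarith [hrm y]
    simp only [hψ0, hh, Set.indicator_of_mem hy]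
    rw [← Real.rpow_mul (abs_nonneg _), mul_div_cancel₀ _ hq.ne', ENNReal.ofReal_rpow_of_nonneg (abs_nonneg _) this.le]
  have hψ0i : ∫⁻ y, ψ0 y ∂μ ≤ 1 := by
    have : ψ0 = Ω.indicator (fun y => ENNReal.ofReal |f y + a| ^ rr y) := by
      funext y
      by_cases hy : y ∈ Ω
      · rw [Set.indicator_of_mem hy, hψ0e y hy]
      · have : 0 < rr y / q := by linarith [hp1 y]
        simp [hψ0, hh, hy, Real.zero_rpow this.ne']
    rw [this, lintegral_indicator hΩm]; exact hmod
  have hH : ∀ y ∈ Ω, (fun y => ENNReal.ofReal (h y)) y = ENNReal.ofReal |f y + a| ^ q := by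
    intro y hy
    simp only [hh, Set.indicator_of_mem hy]
    rw [ENNReal.ofReal_rpow_of_nonneg (abs_nonneg _) hq.le]
  have hψm : Measurable (fun y => ψ0 y + φ y) := hψ0m.add hφm
  have hR : ∀ k : ℕ, (1:ℝ) ≤ 2 ^ (k+1) := fun k => one_le_pow₀ (by norm_num)
  choose Ψ hΨm hΨ1 hΨ2 using fun k : ℕ => hmaj (2^(k+1)) (by positivity) _ hψm
  have hΨi : ∀ k, ∫⁻ x, Ψ k x ∂μ ≤ Am * (1 + Φ) := by
    intro k
    refine (hΨ2 k).trans ?_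
    rw [lintegral_add_left hψ0m]
    gcongr
  have ht : ∀ k x, ((∫⁻ y in ball ρ x (2^(k+1)), ENNReal.ofReal (h y) ∂μ) / μ (ball ρ x (2^(k+1)))) ^ (rr x / q)
      ≤ Ak * Ψ k x + φ x := by
    intro k x
    refine (hkey h hhm hh0 hψ0i _ (hR k) x).trans ?_
    gcongr
    exact hΨ1 k x
  -- smallness
  obtain ⟨M, hM1, hM2⟩ := exists_between hfin
  have hM0 : M ≠ 0 := (lt_of_le_of_lt zero_le hM1).ne'
  have hrr : ∀ x, 0 < rr x := fun x => by linarith [hrm x]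
  have hrm0 : 0 < rm := by linarith
  have hmodM := vnorm_lt hrr hM1
  set ε : ℝ≥0∞ := ((2:ℝ≥0∞) ^ P)⁻¹ ^ (1 / rm) with hε
  have h2P1 : (1:ℝ≥0∞) ≤ 2 ^ P := ENNReal.one_le_rpow (by norm_num) (by linarith)
  have hε1 : ε ≤ 1 := ENNReal.rpow_le_one (ENNReal.inv_le_one.2 h2P1) (by positivity)
  have hε0 : 0 < ε := ENNReal.rpow_pos (by simp) (by simp)
  have hsmall : ∀ᶠ s in 𝓝[>] (0:ℝ), ENNReal.ofReal s ^ (1/q) * M < ε := by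
    have t1 : Tendsto (fun s : ℝ => ENNReal.ofReal s ^ (1/q) * M) (𝓝 0) (𝓝 (ENNReal.ofReal 0 ^ (1/q) * M)) := by
      apply ENNReal.Tendsto.mul_const _ (Or.inr hM2.ne)
      exact ((ENNReal.continuous_rpow_const).comp ENNReal.continuous_ofReal).tendsto 0
    have h0 : ENNReal.ofReal 0 ^ (1/q) * M = 0 := by
      rw [ENNReal.ofReal_zero, ENNReal.zero_rpow_of_pos (by positivity), zero_mul]
    rw [h0] at t1
    exact (t1.mono_left nhdsWithin_le_nhds).eventually_lt_const hε0
  filter_upwards [hsmall, Ioc_mem_nhdsGT hs0] with s hsm ⟨hsp, hss⟩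
  set σ := ENNReal.ofReal s with hσ
  have hσ0 : σ ≠ 0 := by rw [hσ]; simpa using hsp
  have hσf : σ ≠ ∞ := ENNReal.ofReal_ne_top
  set w : ℕ → ℝ≥0∞ := (fun k => (1 - ENNReal.ofReal (2 ^ (-(s * q)))) * ENNReal.ofReal (2 ^ (-(s * q))) ^ k) with hw
  have hw1 : ∑' k, w k ≤ 1 := w_sum hsp hq
  set S : X → ℝ≥0∞ := fun x => ∑' k, w k * (ψ0 x + (Ak * Ψ k x + φ x)) with hS
  have hSm : Measurable S := by
    apply Measurable.ennreal_tsum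
    intro k
    exact (hψ0m.add (((hΨm k).const_mul _).add hφm)).const_mul _
  have hSi : ∫⁻ x, S x ∂μ ≤ 1 + (Ak * (Am * (1 + Φ)) + Φ) := by
    have hmk : ∀ k, Measurable (fun x => ψ0 x + (Ak * Ψ k x + φ x)) := fun k =>
      hψ0m.add (((hΨm k).const_mul _).add hφm)
    have hmk' : ∀ k, AEMeasurable (fun x => w k * (ψ0 x + (Ak * Ψ k x + φ x))) μ := fun k =>
      ((hmk k).const_mul _).aemeasurable
    simp only [hS]
    rw [lintegral_tsum hmk']
    calc _ ≤ ∑' k, w k * (1 + (Ak * (Am * (1 + Φ)) + Φ)) := by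
          apply ENNReal.tsum_le_tsum
          intro k
          rw [lintegral_const_mul _ (hmk k), lintegral_add_left hψ0m,
            lintegral_add_right _ hφm, lintegral_const_mul _ (hΨm k)]
          gcongr
          exact hΨi k
      _ ≤ 1 * (1 + (Ak * (Am * (1 + Φ)) + Φ)) := by
          rw [ENNReal.tsum_mul_right]; gcongr
      _ = _ := one_mul _
  have hpt : ∀ x ∈ Ω, (σ * sob ρ μ Ω f q s x ^ q) ^ (rr x / q) ≤
      2 ^ P * (σ * sob ρ μ Ω f q s₀ x ^ q) ^ (rr x / q) + 2 ^ P * (D * (2 ^ P * S x)) := by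
    intro x hx
    have hpx := hp1 x
    obtain ⟨w', hw', hmain⟩ := hsplit f a _ hH x hx s s₀ hsp hss hs01
    rw [← hw] at hw'
    subst hw'
    refine (ENNReal.rpow_le_rpow hmain (by linarith)).trans ((add_rpow_two (by linarith) (hpP x)).trans ?_)
    rw [mul_add]
    apply add_le_add le_rfl
    apply mul_le_mul' le_rfl
    rw [ENNReal.mul_rpow_of_nonneg _ _ (by linarith)]
    apply mul_le_mul'
    · calc A2 ^ (rr x / q) ≤ (max 1 A2) ^ (rr x / q) := ENNReal.rpow_le_rpow (le_max_right _ _) (by linarith)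
        _ ≤ D := ENNReal.rpow_le_rpow_of_exponent_le (le_max_left _ _) (hpP x)
    · refine (jensen hw1 hpx).trans ?_
      rw [hS, ← ENNReal.tsum_mul_left]
      apply ENNReal.tsum_le_tsum
      intro k
      rw [mul_left_comm]
      apply mul_le_mul' le_rfl
      refine (add_rpow_two (by linarith) (hpP x)).trans ?_
      apply mul_le_mul' le_rfl (add_le_add ?_ ?_)
      · rw [ENNReal.ofReal_rpow_of_nonneg (hh0 x) (by linarith)]
      · exact ht k x
  have hsobe : ∀ t x, (σ * sob ρ μ Ω f q t x ^ q) ^ (rr x / q) = (σ ^ (1/q) * sob ρ μ Ω f q t x) ^ rr x := by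
    intro t x
    have h1 : σ = (σ ^ (1/q)) ^ q := by
      rw [← ENNReal.rpow_mul, one_div_mul_cancel hq.ne', ENNReal.rpow_one]
    conv_lhs => rw [h1, ← ENNReal.mul_rpow_of_nonneg _ _ hq.le, ← ENNReal.rpow_mul, mul_div_cancel₀ _ hq.ne']
  have hnear : 2 ^ P * ∫⁻ x in Ω, (σ * sob ρ μ Ω f q s₀ x ^ q) ^ (rr x / q) ∂μ ≤ 1 := by
    have : ∀ x, (σ * sob ρ μ Ω f q s₀ x ^ q) ^ (rr x / q) ≤ (2 ^ P)⁻¹ * (sob ρ μ Ω f q s₀ x / M) ^ rr x := by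
      intro x
      rw [hsobe]
      have e1 : σ ^ (1/q) * sob ρ μ Ω f q s₀ x = (σ ^ (1/q) * M) * (sob ρ μ Ω f q s₀ x / M) := by
        rw [mul_assoc, ENNReal.mul_div_cancel hM0 hM2.ne]
      rw [e1, ENNReal.mul_rpow_of_nonneg _ _ (hrr x).le]
      apply mul_le_mul' _ le_rfl
      calc (σ ^ (1/q) * M) ^ rr x ≤ ε ^ rr x := ENNReal.rpow_le_rpow hsm.le (hrr x).le
        _ ≤ ε ^ rm := ENNReal.rpow_le_rpow_of_exponent_ge hε1 (hrm x)
        _ = _ := by rw [hε, ← ENNReal.rpow_mul, one_div_mul_cancel hrm0.ne', ENNReal.rpow_one]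
    calc _ ≤ 2 ^ P * ∫⁻ x in Ω, (2 ^ P)⁻¹ * (sob ρ μ Ω f q s₀ x / M) ^ rr x ∂μ := by
          exact mul_le_mul' le_rfl (lintegral_mono this)
      _ = 2 ^ P * ((2 ^ P)⁻¹ * ∫⁻ x in Ω, (sob ρ μ Ω f q s₀ x / M) ^ rr x ∂μ) := by
          rw [lintegral_const_mul' _ _ (by simp)]
      _ = ∫⁻ x in Ω, (sob ρ μ Ω f q s₀ x / M) ^ rr x ∂μ := by
          rw [← mul_assoc, ENNReal.mul_inv_cancel (by positivity) h2P, one_mul]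
      _ ≤ 1 := hmodM
  have htot : ∫⁻ x in Ω, (σ * sob ρ μ Ω f q s x ^ q) ^ (rr x / q) ∂μ ≤ 1 + G := by
    refine (setLIntegral_mono' hΩm hpt).trans ?_
    rw [lintegral_add_right _ (((hSm.const_mul _).const_mul _).const_mul _), lintegral_const_mul' _ _ h2P,
      lintegral_const_mul' _ _ h2P, lintegral_const_mul' _ _ hDf, lintegral_const_mul' _ _ h2P]
    apply add_le_add hnear
    rw [hG]
    gcongr
    exact (setLIntegral_le_lintegral _ _).trans hSi
  have hG1 : 1 ≤ 1 + G := le_self_add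
  have hGf' : 1 + G ≠ ∞ := by finiteness
  set A := 1 + G with hA
  have hA0 : A ≠ 0 := (lt_of_lt_of_le one_pos hG1).ne'
  have hAq0 : A ^ (1/q) ≠ 0 := (ENNReal.rpow_pos (pos_iff_ne_zero.2 hA0) hGf').ne'
  have hsq0 : σ ^ (1/q) ≠ 0 := (ENNReal.rpow_pos (pos_iff_ne_zero.2 hσ0) hσf).ne'
  have hsqf : σ ^ (1/q) ≠ ∞ := ENNReal.rpow_ne_top_of_nonneg (by positivity) hσf
  rw [mul_comm, ← ENNReal.le_div_iff_mul_le (Or.inl hsq0) (Or.inl hsqf)]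
  apply vnorm_le (ENNReal.div_pos hAq0 hsqf).ne'
  have hfin1 : ∀ x, (sob ρ μ Ω f q s x / (A ^ (1/q) / σ ^ (1/q))) ^ rr x ≤ A⁻¹ * (σ * sob ρ μ Ω f q s x ^ q) ^ (rr x / q) := by
    intro x
    have e1 : sob ρ μ Ω f q s x / (A ^ (1/q) / σ ^ (1/q)) = (A ^ (1/q))⁻¹ * (σ ^ (1/q) * sob ρ μ Ω f q s x) := by
      rw [div_eq_mul_inv, ENNReal.inv_div (Or.inl hsqf) (Or.inl hsq0)]
      simp only [div_eq_mul_inv]; ring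
    rw [e1, hsobe, ENNReal.mul_rpow_of_nonneg _ _ (hrr x).le]
    apply mul_le_mul' _ le_rfl
    rw [← ENNReal.inv_rpow, ← ENNReal.rpow_mul]
    calc A⁻¹ ^ (1 / q * rr x) ≤ A⁻¹ ^ (1:ℝ) := by
          apply ENNReal.rpow_le_rpow_of_exponent_ge (ENNReal.inv_le_one.2 hG1)
          rw [one_div_mul_eq_div]; exact hp1 x
      _ = A⁻¹ := ENNReal.rpow_one _
  calc _ ≤ ∫⁻ x in Ω, A⁻¹ * (σ * sob ρ μ Ω f q s x ^ q) ^ (rr x / q) ∂μ := lintegral_mono hfin1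
    _ = A⁻¹ * ∫⁻ x in Ω, (σ * sob ρ μ Ω f q s x ^ q) ^ (rr x / q) ∂μ := lintegral_const_mul' _ _ (by simp [hA0])
    _ ≤ A⁻¹ * A := by gcongr
    _ = 1 := ENNReal.inv_mul_cancel hA0 hGf'

theorem upper [Nonempty X] {ρ : X → X → ℝ} {μ : Measure X} {K₀ : ℝ} {L : ℝ≥0∞}
    (hX : IsQuasiMetricMeasure ρ μ K₀) (hL : IsDoubling ρ μ L)
    (Ω : Set X) (hΩm : MeasurableSet Ω) (q : ℝ) (hq : 0 < q)
    (rr : X → ℝ) (hrrm : Measurable rr) (rm rM : ℝ) (hqm : q ≤ rm) (hrm : ∀ x, rm ≤ rr x) (hrM : ∀ x, rr x ≤ rM)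
    (o : X) (rlim c : ℝ) (hl1 : rm ≤ rlim) (hl2 : rlim ≤ rM) (hc : 0 ≤ c)
    (hdec : ∀ x, |rr x - rlim| * Real.log (Real.exp 1 + ρ o x) ≤ c) :
    ∃ C : ℝ≥0, 0 < C ∧ ∀ (f : X → ℝ) (a : ℝ), Measurable f →
      (∃ s₀ ∈ Set.Ioo (0:ℝ) 1, vnorm μ rr Ω (sob ρ μ Ω f q s₀) < ∞) →
      limsup (fun s : ℝ => ENNReal.ofReal s ^ (1 / q) * vnorm μ rr Ω (sob ρ μ Ω f q s))
              (𝓝[>] (0:ℝ)) ≤ (C : ℝ≥0∞) * vnorm μ rr Ω (fun x => ENNReal.ofReal |f x + a|) := by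
  obtain ⟨A, hA1, hAf, hmain⟩ := upper_norm hX hL Ω hΩm q hq rr hrrm rm rM hqm hrm hrM o rlim c hl1 hl2 hc hdec
  set c := A ^ (1 / q) with hc
  have hc0 : c ≠ 0 := by
    rw [hc]; exact (ENNReal.rpow_pos (lt_of_lt_of_le one_pos hA1) hAf).ne'
  have hcf : c ≠ ∞ := ENNReal.rpow_ne_top_of_nonneg (by positivity) hAf
  have hrr : ∀ x, 0 < rr x := fun x => by linarith [hrm x]
  refine ⟨c.toNNReal, ENNReal.toNNReal_pos hc0 hcf, ?_⟩
  rintro f a hf ⟨s₀, hs₀, hfin⟩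
  rw [ENNReal.coe_toNNReal hcf]
  rw [mul_comm, ← ENNReal.div_le_iff hc0 hcf]
  apply le_of_forall_gt
  intro l0 hl0
  obtain ⟨l', hl', hl'0⟩ := exists_between hl0
  refine lt_of_le_of_lt ?_ hl'0
  have hlf : l' ≠ ∞ := (hl'0.trans_le le_top).ne
  have hlz : l' ≠ 0 := (lt_of_le_of_lt zero_le hl').ne'
  rw [ENNReal.div_le_iff hc0 hcf]
  set l := l'.toReal with hl
  have hlpos : 0 < l := ENNReal.toReal_pos hlz hlf
  have hle : ENNReal.ofReal l = l' := ENNReal.ofReal_toReal hlf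
  have hlie : ENNReal.ofReal l⁻¹ = l'⁻¹ := by rw [ENNReal.ofReal_inv_of_pos hlpos, hle]
  have hmod := vnorm_lt hrr hl'
  have h1 := hmain (fun x => l⁻¹ * f x) (l⁻¹ * a) (hf.const_mul _) (by
    convert hmod using 4 with x
    rw [← mul_add, abs_mul, abs_of_pos (inv_pos.2 hlpos), ENNReal.ofReal_mul (by positivity), hlie, div_eq_mul_inv, mul_comm])
    ⟨s₀, hs₀, by
      rw [sob_smul hq (inv_pos.2 hlpos), hlie]
      exact (vnorm_smul (by simp [hlf]) (by simp [hlz])).trans_lt (ENNReal.mul_lt_top (by simp [pos_iff_ne_zero, hlz]) hfin)⟩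
  apply limsup_le_of_le (by isBoundedDefault)
  filter_upwards [h1] with s hs
  have h2 : sob ρ μ Ω f q s = fun x => l' * sob ρ μ Ω (fun x => l⁻¹ * f x) q s x := by
    rw [sob_smul hq (inv_pos.2 hlpos), hlie]
    funext x
    rw [← mul_assoc, ENNReal.mul_inv_cancel hlz hlf, one_mul]
  rw [h2]
  calc _ ≤ ENNReal.ofReal s ^ (1/q) * (l' * vnorm μ rr Ω (sob ρ μ Ω (fun x => l⁻¹ * f x) q s)) := by
        gcongr; exact vnorm_smul hlz hlf
    _ = l' * (ENNReal.ofReal s ^ (1/q) * vnorm μ rr Ω (sob ρ μ Ω (fun x => l⁻¹ * f x) q s)) := by ring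
    _ ≤ l' * c := by gcongr

theorem statement13 [Nonempty X] (ρ : X → X → ℝ) (μ : Measure X) (K₀ : ℝ) (L : ℝ≥0∞)
    (hX : IsQuasiMetricMeasure ρ μ K₀) (hL : IsDoubling ρ μ L) (hWRD : WRD ρ μ)
    (Ω : Set X) (hΩm : MeasurableSet Ω) (hΩo : IsRhoOpen ρ Ω) (hWMD : WMD ρ μ Ω)
    (rr : X → ℝ) (hrrm : Measurable rr) (hrrpos : ∀ x, 0 < rr x)
    (hLH : GloballyLogHolder ρ rr)
    (q : ℝ) (hq : 0 < q)
    (hbounds : ∃ rm rM : ℝ, q < rm ∧ ∀ᵐ x ∂μ, rm ≤ rr x ∧ rr x ≤ rM) :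
    ∃ C C' : ℝ≥0, 0 < C ∧ 0 < C' ∧
      ∀ f : X → ℝ, Measurable f →
        (⨅ a : ℝ, vnorm μ rr Ω fun x => ENNReal.ofReal |f x + a|) < ∞ →
        (∃ s₀ ∈ Set.Ioo (0:ℝ) 1, vnorm μ rr Ω (sob ρ μ Ω f q s₀) < ∞) →
        (C : ℝ≥0∞) * (⨅ a : ℝ, vnorm μ rr Ω fun x => ENNReal.ofReal |f x + a|) ≤
            liminf (fun s : ℝ => ENNReal.ofReal s ^ (1 / q) * vnorm μ rr Ω (sob ρ μ Ω f q s))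
              (𝓝[>] (0:ℝ)) ∧
          limsup (fun s : ℝ => ENNReal.ofReal s ^ (1 / q) * vnorm μ rr Ω (sob ρ μ Ω f q s))
              (𝓝[>] (0:ℝ)) ≤
            (C' : ℝ≥0∞) * (⨅ a : ℝ, vnorm μ rr Ω fun x => ENNReal.ofReal |f x + a|) := by
  obtain ⟨rm, rM, hqm, hbd⟩ := hbounds
  obtain ⟨o, rlim, c, hc, -, hdec⟩ := hLH
  set M := max rm rM with hM
  have hmM : rm ≤ M := le_max_left _ _
  set cl : ℝ → ℝ := fun t => max rm (min t M) with hcl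
  have hcl1 : ∀ t, rm ≤ cl t := fun t => le_max_left _ _
  have hcl2 : ∀ t, cl t ≤ M := fun t => max_le hmM (min_le_right _ _)
  have hclip : ∀ t u, |cl t - cl u| ≤ |t - u| := by
    intro t u
    calc |cl t - cl u| ≤ |min t M - min u M| := by
          simp only [hcl]
          rw [max_comm rm, max_comm rm]
          exact abs_max_sub_max_le_abs _ _ _
      _ ≤ |t - u| := by
          refine (abs_min_sub_min_le_max _ _ _ _).trans ?_
          simp
  set rr' : X → ℝ := fun x => cl (rr x) with hrr'
  have hae : rr =ᵐ[μ] rr' := by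
    filter_upwards [hbd] with x hx
    simp only [hrr', hcl]
    rw [min_eq_left (hx.2.trans (le_max_right _ _)), max_eq_right hx.1]
  have hm' : Measurable rr' := measurable_const.max (hrrm.min measurable_const)
  have hpos' : ∀ x, 0 < rr' x := fun x => by linarith [hcl1 (rr x)]
  have hdec' : ∀ x, |rr' x - cl rlim| * Real.log (Real.exp 1 + ρ o x) ≤ c := by
    intro x
    have hlog : 0 < Real.log (Real.exp 1 + ρ o x) := by
      apply Real.log_pos
      have := Real.add_one_le_exp (1:ℝ)
      have := hX.nonneg o x
      linarith
    rw [← le_div_iff₀ hlog]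
    exact (hclip _ _).trans (hdec x)
  obtain ⟨C, hC, hlow⟩ := lower hX hL hWRD Ω hΩm hWMD q hq rr' hpos' M (fun x => hcl2 _)
  obtain ⟨C', hC', hup⟩ := upper hX hL Ω hΩm q hq rr' hm' rm M hqm.le (fun x => hcl1 _) (fun x => hcl2 _)
    o (cl rlim) c (hcl1 _) (hcl2 _) hc.le hdec'
  refine ⟨C, C', hC, hC', ?_⟩
  intro f hf hinf hs
  simp only [vnorm_congr hae] at hinf hs ⊢
  refine ⟨?_, ?_⟩
  · obtain ⟨a, ha⟩ := iInf_lt_iff.1 hinf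
    refine le_trans ?_ (hlow f a hf ha)
    gcongr
    exact iInf_le _ a
  · rw [ENNReal.mul_iInf_of_ne (by exact_mod_cast hC'.ne') ENNReal.coe_ne_top]
    exact le_iInf fun a => hup f a hf hs
end Paper
end
end

section
/- Let (X,ρ,μ) be a space of homogeneous type, let φ : X × (0,∞) → (0,∞) belong to 𝒢^dec_1 and satisfy the nearness condition, and let Φ be a strictly increasing convex Orlicz function with 1 < r_Φ⁻ ≤ r_Φ⁺ < ∞. Then the Hardy–Littlewood maximal operator M is bounded on the generalized Orlicz–Morrey space L^{(Φ,φ)}(X): there exists a positive constant C such that for every measurable f with ‖f‖_{L^{(Φ,φ)}(X)} < ∞, ‖Mf‖_{L^{(Φ,φ)}(X)} ≤ C·‖f‖_{L^{(Φ,φ)}(X)}. -/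
noncomputable section

open MeasureTheory Filter Set
open scoped ENNReal NNReal Topology

namespace Paper

variable {X : Type*} [MeasurableSpace X]

/-- `Φ` is an Orlicz function (conditions imposed on `[0,∞)`). -/
structure OrliczFun (Φ : ℝ → ℝ) : Prop where
  zero : Φ 0 = 0
  nonneg : ∀ t, 0 ≤ t → 0 ≤ Φ t
  mono : ∀ s t, 0 ≤ s → s ≤ t → Φ s ≤ Φ t
  pos : ∀ t, 0 < t → 0 < Φ t
  tendsto_atTop : Tendsto Φ atTop atTop

/-- `Φ` is of lower type `r`. -/
def LowerType (Φ : ℝ → ℝ) (r : ℝ) : Prop :=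
  ∃ C : ℝ, 1 ≤ C ∧ ∀ t s : ℝ, 0 < t → 0 < s → s < 1 → Φ (s * t) ≤ C * s ^ r * Φ t

/-- `Φ` is of upper type `r`. -/
def UpperType (Φ : ℝ → ℝ) (r : ℝ) : Prop :=
  ∃ C : ℝ, 1 ≤ C ∧ ∀ t s : ℝ, 0 < t → 1 < s → Φ (s * t) ≤ C * s ^ r * Φ t

/-- The canonical extension of `Φ` to `ℝ≥0∞`. -/
def extO (Φ : ℝ → ℝ) (t : ℝ≥0∞) : ℝ≥0∞ :=
  if t = ∞ then ∞ else ENNReal.ofReal (Φ t.toReal)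

/-- The generalized inverse of `Φ`. -/
def invO (Φ : ℝ → ℝ) (u : ℝ) : ℝ :=
  sInf {t : ℝ | 0 ≤ t ∧ u ≤ Φ t}

/-- `‖f‖_{Φ,φ,B}` for the ball `B = B(x,r)`:
the least `λ` with `μ(B)⁻¹ ∫_B Φ(|f|/λ) dμ ≤ φ(B)`. -/
def ballNorm (ρ : X → X → ℝ) (μ : Measure X) (Φ : ℝ → ℝ) (φ : X → ℝ → ℝ)
    (x : X) (r : ℝ) (g : X → ℝ≥0∞) : ℝ≥0∞ :=
  sInf {lam : ℝ≥0∞ | lam ≠ 0 ∧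
    (∫⁻ y in ball ρ x r, extO Φ (g y / lam) ∂μ) ≤
      ENNReal.ofReal (φ x r) * μ (ball ρ x r)}

/-- The generalized Orlicz–Morrey quasi-norm `‖f‖_{L^{(Φ,φ)}(X)}`. -/
def OMnorm (ρ : X → X → ℝ) (μ : Measure X) (Φ : ℝ → ℝ) (φ : X → ℝ → ℝ)
    (g : X → ℝ≥0∞) : ℝ≥0∞ :=
  ⨆ (x : X) (r : ℝ) (_ : 0 < r), ballNorm ρ μ Φ φ x r g

/-- `φ` takes values in `(0,∞)`. -/
def PhiPos (φ : X → ℝ → ℝ) : Prop := ∀ (x : X) (r : ℝ), 0 < r → 0 < φ x r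

/-- The nearness condition for `φ`. -/
def Nearness (ρ : X → X → ℝ) (φ : X → ℝ → ℝ) : Prop :=
  ∃ C : ℝ, 1 ≤ C ∧ ∀ (x y : X) (r : ℝ), 0 < r → ρ x y ≤ r → φ x r ≤ C * φ y r

/-- `φ ∈ 𝒢^dec_1`: `r ↦ μ(B(x,r))φ(x,r)` is almost increasing and
`r ↦ φ(x,r)` is almost decreasing. -/
def Gdec1 (ρ : X → X → ℝ) (μ : Measure X) (φ : X → ℝ → ℝ) : Prop :=
  ∃ C : ℝ, 1 ≤ C ∧ ∀ (x : X) (r s : ℝ), 0 < r → r ≤ s →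
    μ (ball ρ x r) * ENNReal.ofReal (φ x r) ≤
        ENNReal.ofReal C * (μ (ball ρ x s) * ENNReal.ofReal (φ x s)) ∧
      φ x s ≤ C * φ x r

/-- The Hardy–Littlewood maximal operator on `(X, ρ, μ)`. -/
def maximal (ρ : X → X → ℝ) (μ : Measure X) (g : X → ℝ≥0∞) (x : X) : ℝ≥0∞ :=
  ⨆ (z : X) (r : ℝ) (_ : 0 < r) (_ : x ∈ ball ρ z r),
    (∫⁻ y in ball ρ z r, g y ∂μ) / μ (ball ρ z r)

lemma doubling_const {ρ : X → X → ℝ} {μ : Measure X} {L : ℝ≥0∞} (hL : IsDoubling ρ μ L) (c : ℝ) :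
    ∃ A : ℝ≥0∞, 1 ≤ A ∧ A ≠ ∞ ∧ ∀ x r, 0 < r → μ (ball ρ x (c * r)) ≤ A * μ (ball ρ x r) := by
  obtain ⟨h1, h2, h3⟩ := hL
  obtain ⟨n, hn⟩ := pow_unbounded_of_one_lt c (one_lt_two : (1:ℝ) < 2)
  refine ⟨L ^ n, one_le_pow₀ h1, ENNReal.pow_ne_top h2.ne, fun x r hr => ?_⟩
  have key : ∀ m : ℕ, μ (ball ρ x (2 ^ m * r)) ≤ L ^ m * μ (ball ρ x r) := by
    intro m
    induction m with
    | zero => simp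
    | succ m ih =>
      have := (h3 x (2 ^ m * r) (by positivity)).2.1
      calc μ (ball ρ x (2 ^ (m+1) * r)) = μ (ball ρ x (2 * (2 ^ m * r))) := by
            congr 2; ring
        _ ≤ L * μ (ball ρ x (2 ^ m * r)) := this
        _ ≤ L * (L ^ m * μ (ball ρ x r)) := by gcongr
        _ = _ := by rw [pow_succ]; ring
  refine le_trans (measure_mono ?_) (key n)
  intro y hy
  have hy' : ρ x y < c * r := hy
  have : c * r ≤ 2 ^ n * r := by gcongr
  exact lt_of_lt_of_le hy' this

lemma weak_aux {ρ : X → X → ℝ} {μ : Measure X} {K₀ : ℝ} {L : ℝ≥0∞}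
    (hX : IsQuasiMetricMeasure ρ μ K₀) (hL : IsDoubling ρ μ L) {A : ℝ≥0∞}
    (hA : ∀ x r, 0 < r → μ (ball ρ x (5 * K₀ ^ 2 * r)) ≤ A * μ (ball ρ x r))
    (h : X → ℝ≥0∞) (hh : ∫⁻ x, h x ∂μ ≠ ∞) (t : ℝ≥0∞) (R : ℝ) :
    t * μ {x | ∃ z r, 0 < r ∧ r ≤ R ∧ x ∈ ball ρ z r ∧
      t < (∫⁻ y in ball ρ z r, h y ∂μ) / μ (ball ρ z r)} ≤ A * ∫⁻ x, h x ∂μ := by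
  set T : Set (X × ℝ) := {p | 0 < p.2 ∧ p.2 ≤ R ∧
      t < (∫⁻ y in ball ρ p.1 p.2, h y ∂μ) / μ (ball ρ p.1 p.2)} with hT
  have hball : ∀ z r, 0 < r → z ∈ ball ρ z r := fun z r hr => by
    have : ρ z z = 0 := (hX.eq_zero_iff z z).2 rfl
    show ρ z z < r
    rw [this]; exact hr
  obtain ⟨u, huT, hud, hu⟩ := Vitali.exists_disjoint_subfamily_covering_enlargement
    (fun p : X × ℝ => ball ρ p.1 p.2) T (fun p => p.2) 2 one_lt_two
    (fun a ha => ha.1.le) R (fun a ha => ha.2.1) (fun a ha => ⟨a.1, hball _ _ ha.1⟩)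
  have hlt : ∀ p ∈ T, t * μ (ball ρ p.1 p.2) < ∫⁻ y in ball ρ p.1 p.2, h y ∂μ := by
    intro p hp
    obtain ⟨g1, g2, g3⟩ := hL.2.2 p.1 p.2 hp.1
    exact (ENNReal.lt_div_iff_mul_lt (Or.inl g1.ne') (Or.inl g3.ne)).1 hp.2.2
  have hcount : u.Countable := by
    have hd : Pairwise (Function.onFun Disjoint fun i : u => ball ρ i.1.1 i.1.2) := by
      intro i j hij
      exact hud i.2 j.2 (fun e => hij (Subtype.ext e))
    have := Measure.countable_meas_pos_of_disjoint_of_meas_iUnion_ne_top (μ.withDensity h)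
      (As := fun i : u => ball ρ i.1.1 i.1.2) (fun i => hX.measurableSet_ball _ _) hd (by
        refine ne_top_of_le_ne_top hh ?_
        refine (measure_mono (subset_univ _)).trans ?_
        rw [withDensity_apply _ MeasurableSet.univ]; simp)
    have e : {i : u | 0 < (μ.withDensity h) (ball ρ i.1.1 i.1.2)} = univ := by
      ext i
      simp only [mem_ofPred_eq, mem_univ, iff_true]
      rw [withDensity_apply _ (hX.measurableSet_ball _ _)]
      exact lt_of_le_of_lt (zero_le) (hlt i.1 (huT i.2))
    rw [e] at this
    exact Set.countable_coe_iff.1 (Set.countable_univ_iff.1 this)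
  have hsub : {x | ∃ z r, 0 < r ∧ r ≤ R ∧ x ∈ ball ρ z r ∧
      t < (∫⁻ y in ball ρ z r, h y ∂μ) / μ (ball ρ z r)} ⊆
      ⋃ p ∈ u, ball ρ p.1 (5 * K₀ ^ 2 * p.2) := by
    rintro x ⟨z, r, hr, hrR, hx, ht⟩
    obtain ⟨b, hb, ⟨w, hw1, hw2⟩, hrb⟩ := hu (z, r) ⟨hr, hrR, ht⟩
    simp only [mem_iUnion]
    refine ⟨b, hb, ?_⟩
    have hx : ρ z x < r := hx
    have hw1 : ρ z w < r := hw1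
    have hw2 : ρ b.1 w < b.2 := hw2
    have hK := hX.one_le
    have hb0 : 0 < b.2 := (huT hb).1
    have hrb : r ≤ 2 * b.2 := hrb
    show ρ b.1 x < 5 * K₀ ^ 2 * b.2
    have t1 := hX.triangle b.1 w x
    have t2 := hX.triangle w z x
    rw [hX.symm w z] at t2
    have t3 : ρ w x ≤ K₀ * (4 * b.2) := t2.trans (by gcongr; linarith)
    calc ρ b.1 x ≤ K₀ * (ρ b.1 w + ρ w x) := t1
      _ < K₀ * (K₀ * b.2 + K₀ * (4 * b.2)) := by
        apply mul_lt_mul_of_pos_left _ (by linarith)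
        nlinarith
      _ = _ := by ring
  calc t * μ _ ≤ t * μ (⋃ p ∈ u, ball ρ p.1 (5 * K₀ ^ 2 * p.2)) := by gcongr
    _ ≤ t * ∑' p : u, μ (ball ρ p.1.1 (5 * K₀ ^ 2 * p.1.2)) := by
      gcongr; exact measure_biUnion_le μ hcount _
    _ ≤ t * ∑' p : u, A * μ (ball ρ p.1.1 p.1.2) := by
      gcongr with p; exact hA _ _ (huT p.2).1
    _ = A * ∑' p : u, t * μ (ball ρ p.1.1 p.1.2) := by
      rw [ENNReal.tsum_mul_left, ENNReal.tsum_mul_left]; ring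
    _ ≤ A * ∑' p : u, ∫⁻ y in ball ρ p.1.1 p.1.2, h y ∂μ := by
      gcongr with p; exact (hlt p.1 (huT p.2)).le
    _ = A * ∫⁻ y in ⋃ p ∈ u, ball ρ p.1 p.2, h y ∂μ := by
      rw [lintegral_biUnion hcount (fun p _ => hX.measurableSet_ball _ _) hud]
    _ ≤ _ := by gcongr; exact Measure.restrict_le_self

lemma weak_type {ρ : X → X → ℝ} {μ : Measure X} {K₀ : ℝ} {L : ℝ≥0∞}
    (hX : IsQuasiMetricMeasure ρ μ K₀) (hL : IsDoubling ρ μ L) :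
    ∃ A : ℝ≥0∞, 1 ≤ A ∧ A ≠ ∞ ∧ ∀ (h : X → ℝ≥0∞) (t : ℝ≥0∞),
      t * μ {x | t < maximal ρ μ h x} ≤ A * ∫⁻ x, h x ∂μ := by
  obtain ⟨A, hA1, hAt, hA⟩ := doubling_const hL (5 * K₀ ^ 2)
  refine ⟨A, hA1, hAt, fun h t => ?_⟩
  by_cases hh : ∫⁻ x, h x ∂μ = ∞
  · rw [hh, ENNReal.mul_top (by positivity)]; exact le_top
  have e : {x | t < maximal ρ μ h x} = ⋃ n : ℕ, {x | ∃ z r, 0 < r ∧ r ≤ (n:ℝ) ∧ x ∈ ball ρ z r ∧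
      t < (∫⁻ y in ball ρ z r, h y ∂μ) / μ (ball ρ z r)} := by
    ext x
    simp only [maximal, mem_ofPred_eq, lt_iSup_iff, mem_iUnion]
    constructor
    · rintro ⟨z, r, hr, hx, ht⟩
      obtain ⟨n, hn⟩ := exists_nat_ge r
      exact ⟨n, z, r, hr, hn, hx, ht⟩
    · rintro ⟨n, z, r, hr, hn, hx, ht⟩
      exact ⟨z, r, hr, hx, ht⟩
  rw [e, Monotone.measure_iUnion, ENNReal.mul_iSup]
  · exact iSup_le fun n => weak_aux hX hL hA h hh t n
  · intro m n hmn x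
    rintro ⟨z, r, hr, hn, hx, ht⟩
    exact ⟨z, r, hr, hn.trans (by exact_mod_cast hmn), hx, ht⟩

lemma extO_mono {Φ : ℝ → ℝ} (hΦ : OrliczFun Φ) {s t : ℝ≥0∞} (h : s ≤ t) :
    extO Φ s ≤ extO Φ t := by
  unfold extO
  by_cases ht : t = ∞
  · simp [ht]
  · have hs : s ≠ ∞ := ne_top_of_le_ne_top ht h
    rw [if_neg hs, if_neg ht]
    exact ENNReal.ofReal_le_ofReal (hΦ.mono _ _ ENNReal.toReal_nonneg (ENNReal.toReal_mono ht h))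

lemma extO_ofReal {Φ : ℝ → ℝ} {t : ℝ} (h : 0 ≤ t) :
    extO Φ (ENNReal.ofReal t) = ENNReal.ofReal (Φ t) := by
  simp [extO, ENNReal.toReal_ofReal h]

lemma extO_zero {Φ : ℝ → ℝ} (hΦ : OrliczFun Φ) : extO Φ 0 = 0 := by
  simp [extO, hΦ.zero]

lemma pw1 {Φ : ℝ → ℝ} (hΦ : OrliczFun Φ) (v : ℝ≥0∞) :
    extO Φ v ≤ ∑' k : ℤ, if ENNReal.ofReal ((2:ℝ) ^ k) < v then
      ENNReal.ofReal (Φ (2 ^ (k + 1))) else 0 := by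
  by_cases hv : v = ∞
  · subst hv
    simp only [ENNReal.ofReal_lt_top, if_true]
    have : ∀ M : ℝ, ENNReal.ofReal M ≤ ∑' k : ℤ, ENNReal.ofReal (Φ (2 ^ (k + 1))) := by
      intro M
      obtain ⟨T, hT⟩ := (hΦ.tendsto_atTop.eventually_ge_atTop M).exists_forall_of_atTop
      obtain ⟨n, hn⟩ := pow_unbounded_of_one_lt T (one_lt_two : (1:ℝ) < 2)
      refine le_trans ?_ (ENNReal.le_tsum ((n:ℤ) - 1))
      apply ENNReal.ofReal_le_ofReal
      apply hT
      simp only [sub_add_cancel, zpow_natCast]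
      exact hn.le
    have h2 : (∑' k : ℤ, ENNReal.ofReal (Φ (2 ^ (k + 1)))) = ∞ := by
      by_contra hne
      have := this ((∑' k : ℤ, ENNReal.ofReal (Φ (2 ^ (k + 1)))).toReal + 1)
      rw [ENNReal.ofReal_add ENNReal.toReal_nonneg zero_le_one, ENNReal.ofReal_toReal hne,
        ENNReal.ofReal_one] at this
      exact absurd this (not_le.2 (ENNReal.lt_add_right hne one_ne_zero))
    rw [h2]; exact le_top
  · lift v to ℝ≥0 using hv
    rcases eq_or_ne v 0 with rfl | hv0
    · simp [extO_zero hΦ]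
    · obtain ⟨k, hk1, hk2⟩ := exists_mem_Ioc_zpow (x := (v:ℝ)) (y := 2) (by positivity) one_lt_two
      have hv' : (v : ℝ≥0∞) = ENNReal.ofReal (v:ℝ) := by simp
      refine le_trans ?_ (ENNReal.le_tsum k)
      rw [hv', if_pos, extO_ofReal v.coe_nonneg]
      · exact ENNReal.ofReal_le_ofReal (hΦ.mono _ _ v.coe_nonneg hk2)
      · exact (ENNReal.ofReal_lt_ofReal_iff (by positivity)).2 hk1

lemma upper_const {Φ : ℝ → ℝ} (hΦ : OrliczFun Φ) {r : ℝ} (hut : UpperType Φ r) (s : ℝ)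
    (hs : 1 < s) : ∃ D : ℝ, 1 ≤ D ∧ ∀ t, 0 ≤ t → Φ (s * t) ≤ D * Φ t := by
  obtain ⟨C, hC, h⟩ := hut
  refine ⟨max 1 (C * s ^ r), le_max_left _ _, fun t ht => ?_⟩
  rcases ht.eq_or_lt with rfl | ht
  · simp [hΦ.zero]
  · exact (h t s ht hs).trans (mul_le_mul_of_nonneg_right (le_max_right _ _) (hΦ.nonneg _ ht.le))

lemma pw2 {Φ : ℝ → ℝ} (hΦ : OrliczFun Φ) {r r' : ℝ} (hr : 1 < r) (hlt : LowerType Φ r)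
    (hut : UpperType Φ r') : ∃ C : ℝ≥0∞, C ≠ ∞ ∧ ∀ v : ℝ≥0∞,
    ∑' k : ℤ, ENNReal.ofReal (Φ (2 ^ (k + 1)) * 2 ^ (1 - k)) *
      (if ENNReal.ofReal ((2:ℝ) ^ (k - 1)) < v then v else 0) ≤ C * extO Φ v := by
  obtain ⟨C, hC, h⟩ := hlt
  obtain ⟨D, hD, hD'⟩ := upper_const hΦ hut 4 (by norm_num)
  set q : ℝ := (2:ℝ) ^ (-(r-1)) with hq
  have hq0 : 0 < q := by positivity
  have hq1 : q < 1 := Real.rpow_lt_one_of_one_lt_of_neg one_lt_two (by linarith)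
  have hgne : (∑' n : ℕ, ENNReal.ofReal q ^ n) ≠ ∞ := by
    rw [ENNReal.tsum_geometric]
    apply ENNReal.inv_ne_top.2
    have : ENNReal.ofReal q < 1 := by
      rw [← ENNReal.ofReal_one]; exact (ENNReal.ofReal_lt_ofReal_iff one_pos).2 hq1
    exact (tsub_pos_of_lt this).ne'
  refine ⟨ENNReal.ofReal (C * D) * (∑' n : ℕ, ENNReal.ofReal q ^ n),
    ENNReal.mul_ne_top ENNReal.ofReal_ne_top hgne, fun v => ?_⟩
  have hCD : 0 < C * D := by positivity
  by_cases hv : v = ∞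
  · subst hv
    have : extO Φ ∞ = ∞ := by simp [extO]
    rw [this, ENNReal.mul_top]
    · exact le_top
    · apply mul_ne_zero
      · simpa using hCD
      · refine (lt_of_lt_of_le one_pos ?_).ne'
        exact le_trans (by simp) (ENNReal.le_tsum (f := fun n : ℕ => ENNReal.ofReal q ^ n) 0)
  lift v to ℝ≥0 using hv
  rcases eq_or_ne v 0 with rfl | hv0
  · simp
  have hvp : (0:ℝ) < v := by positivity
  have hv' : (v : ℝ≥0∞) = ENNReal.ofReal (v:ℝ) := by simp
  obtain ⟨m, hm1, hm2⟩ := exists_mem_Ioc_zpow (x := (v:ℝ)) (y := 2) hvp one_lt_two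
  rw [hv', extO_ofReal v.coe_nonneg]
  generalize hw : (v:ℝ) = w at *
  set F : ℤ → ℝ≥0∞ := fun k => ENNReal.ofReal (Φ (2 ^ (k + 1)) * 2 ^ (1 - k)) *
      (if ENNReal.ofReal ((2:ℝ) ^ (k - 1)) < ENNReal.ofReal w then ENNReal.ofReal w else 0) with hF
  have hinj : Function.Injective (fun j : ℕ => m + 1 - (j:ℤ)) := by
    intro a b hab
    simp only at hab
    omega
  have hsupp : Function.support F ⊆ Set.range (fun j : ℕ => m + 1 - (j:ℤ)) := by
    intro k hk
    have hk' : ENNReal.ofReal ((2:ℝ) ^ (k - 1)) < ENNReal.ofReal w := by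
      by_contra hcon
      apply hk
      simp only [hF, if_neg hcon, mul_zero]
    have h1 : (2:ℝ) ^ (k-1) < w := (ENNReal.ofReal_lt_ofReal_iff hvp).1 hk'
    have h2 : (2:ℝ) ^ (k-1) < 2 ^ (m+1) := h1.trans_le hm2
    have h3 : k - 1 < m + 1 := (zpow_lt_zpow_iff_right₀ one_lt_two).1 h2
    exact ⟨(m + 1 - k).toNat, by simp only; omega⟩
  rw [← hinj.tsum_eq hsupp]
  calc ∑' j : ℕ, F (m + 1 - (j:ℤ)) ≤
      ∑' j : ℕ, (ENNReal.ofReal (C * D) * ENNReal.ofReal (Φ w)) * ENNReal.ofReal q ^ j := by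
        apply ENNReal.tsum_le_tsum
        intro j
        simp only [hF]
        set k : ℤ := m + 1 - (j:ℤ) with hk
        split_ifs with hlt
        swap
        · simp
        have hkw : (2:ℝ) ^ (k-1) < w := (ENNReal.ofReal_lt_ofReal_iff hvp).1 hlt
        rw [← ENNReal.ofReal_mul' hvp.le, ← ENNReal.ofReal_mul hCD.le, ← ENNReal.ofReal_pow hq0.le,
          ← ENNReal.ofReal_mul (mul_nonneg hCD.le (hΦ.nonneg _ hvp.le))]
        apply ENNReal.ofReal_le_ofReal
        set s : ℝ := 2 ^ (k-1) / w with hs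
        have hs0 : 0 < s := by positivity
        have hs1 : s < 1 := (div_lt_one hvp).2 hkw
        have e1 : (2:ℝ) ^ (k+1) = s * (4 * w) := by
          rw [hs]
          have : (2:ℝ) ^ (k+1) = 2 ^ (k-1) * 4 := by
            rw [show k + 1 = (k - 1) + 2 by ring, zpow_add₀ two_ne_zero]; norm_num
          rw [this]; field_simp
        have e2 : (2:ℝ) ^ (1 - k) * w = s⁻¹ := by
          rw [hs, show 1 - k = -(k-1) by ring, zpow_neg]; field_simp
        have hb := h (4 * w) s (by positivity) hs0 hs1
        have hb2 := hD' w hvp.le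
        have hsq : s ^ (r - 1) ≤ q ^ j := by
          have : s ≤ 2 ^ (-(j:ℝ)) := by
            rw [hs, div_le_iff₀ hvp]
            have e : (2:ℝ) ^ (k-1) = 2 ^ (-(j:ℝ)) * 2 ^ m := by
              rw [show k - 1 = -(j:ℤ) + m by omega, zpow_add₀ two_ne_zero]
              congr 1
              rw [← Real.rpow_intCast]; simp
            rw [e]
            gcongr
          calc s ^ (r-1) ≤ (2 ^ (-(j:ℝ))) ^ (r-1) :=
                Real.rpow_le_rpow hs0.le this (by linarith)
            _ = q ^ j := by
              rw [hq, ← Real.rpow_natCast, ← Real.rpow_mul (by norm_num),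
                ← Real.rpow_mul (by norm_num)]
              congr 1; ring
        calc Φ (2 ^ (k+1)) * 2 ^ (1-k) * w = Φ (s * (4 * w)) * s⁻¹ := by
              rw [mul_assoc, e2, e1]
          _ ≤ (C * s ^ r * (D * Φ w)) * s⁻¹ := by
              gcongr
              exact hb.trans (by gcongr)
          _ = C * D * Φ w * s ^ (r-1) := by
              rw [Real.rpow_sub_one hs0.ne']; field_simp
          _ ≤ C * D * Φ w * q ^ j := by
              have := hΦ.nonneg w hvp.le
              gcongr
    _ = _ := by rw [ENNReal.tsum_mul_left]; ring

lemma strong_type {ρ : X → X → ℝ} {μ : Measure X} {K₀ : ℝ} {L : ℝ≥0∞}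
    (hX : IsQuasiMetricMeasure ρ μ K₀) (hL : IsDoubling ρ μ L)
    {Φ : ℝ → ℝ} (hΦ : OrliczFun Φ) {r r' : ℝ} (hr : 1 < r) (hlt : LowerType Φ r)
    (hut : UpperType Φ r') : ∃ C : ℝ≥0∞, C ≠ ∞ ∧ ∀ h : X → ℝ≥0∞, Measurable h →
      ∫⁻ x, extO Φ (maximal ρ μ h x) ∂μ ≤ C * ∫⁻ x, extO Φ (h x) ∂μ := by
  obtain ⟨A, hA1, hAt, hA⟩ := weak_type hX hL
  obtain ⟨C, hCt, hC⟩ := pw2 hΦ hr hlt hut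
  refine ⟨A * C, ENNReal.mul_ne_top hAt hCt, fun h hh => ?_⟩
  set hk : ℤ → X → ℝ≥0∞ := fun k x => if ENNReal.ofReal ((2:ℝ) ^ (k - 1)) < h x then h x else 0
    with hkdef
  have hkm : ∀ k, Measurable (hk k) := fun k =>
    Measurable.ite (measurableSet_lt measurable_const hh) hh measurable_const
  set c : ℤ → ℝ≥0∞ := fun k => ENNReal.ofReal (Φ (2 ^ (k + 1))) with hc
  set E : ℤ → Set X := fun k => toMeasurable μ {x | ENNReal.ofReal ((2:ℝ) ^ k) < maximal ρ μ h x}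
    with hE
  have hmax : ∀ k, {x | ENNReal.ofReal ((2:ℝ) ^ k) < maximal ρ μ h x} ⊆
      {x | ENNReal.ofReal ((2:ℝ) ^ (k-1)) < maximal ρ μ (hk k) x} := by
    intro k x hx
    have hx : ENNReal.ofReal ((2:ℝ) ^ k) < maximal ρ μ h x := hx
    show ENNReal.ofReal ((2:ℝ) ^ (k-1)) < maximal ρ μ (hk k) x
    simp only [maximal, lt_iSup_iff] at hx ⊢
    obtain ⟨z, s, hs, hxs, hlt⟩ := hx
    refine ⟨z, s, hs, hxs, ?_⟩
    obtain ⟨g1, -, g3⟩ := hL.2.2 z s hs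
    by_contra hcon
    rw [not_lt] at hcon
    refine absurd hlt (not_lt.2 ?_)
    calc (∫⁻ y in ball ρ z s, h y ∂μ) / μ (ball ρ z s)
        ≤ (∫⁻ y in ball ρ z s, (hk k y + ENNReal.ofReal ((2:ℝ) ^ (k-1))) ∂μ) / μ (ball ρ z s) := by
          gcongr with y
          simp only [hkdef]
          split_ifs with hy
          · exact le_self_add
          · simpa using hy
      _ = (∫⁻ y in ball ρ z s, hk k y ∂μ) / μ (ball ρ z s) + ENNReal.ofReal ((2:ℝ) ^ (k-1)) := by
          rw [lintegral_add_right _ measurable_const, ENNReal.add_div, lintegral_const]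
          congr 1
          rw [Measure.restrict_apply_univ, ENNReal.mul_div_cancel_right g1.ne' g3.ne]
      _ ≤ ENNReal.ofReal ((2:ℝ) ^ (k-1)) + ENNReal.ofReal ((2:ℝ) ^ (k-1)) := by gcongr
      _ = ENNReal.ofReal ((2:ℝ) ^ k) := by
          rw [← ENNReal.ofReal_add (by positivity) (by positivity)]
          congr 1
          rw [zpow_sub_one₀ two_ne_zero]; ring
  have hmu : ∀ k, μ (E k) ≤ ENNReal.ofReal ((2:ℝ) ^ (1-k)) * (A * ∫⁻ x, hk k x ∂μ) := by
    intro k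
    have h1 := hA (hk k) (ENNReal.ofReal ((2:ℝ) ^ (k-1)))
    have e : ENNReal.ofReal ((2:ℝ) ^ (1-k)) * ENNReal.ofReal ((2:ℝ) ^ (k-1)) = 1 := by
      rw [← ENNReal.ofReal_mul (by positivity), ← zpow_add₀ two_ne_zero]; simp
    calc μ (E k) = μ {x | ENNReal.ofReal ((2:ℝ) ^ k) < maximal ρ μ h x} := measure_toMeasurable _
      _ ≤ μ {x | ENNReal.ofReal ((2:ℝ) ^ (k-1)) < maximal ρ μ (hk k) x} := measure_mono (hmax k)
      _ = ENNReal.ofReal ((2:ℝ) ^ (1-k)) * (ENNReal.ofReal ((2:ℝ) ^ (k-1)) *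
          μ {x | ENNReal.ofReal ((2:ℝ) ^ (k-1)) < maximal ρ μ (hk k) x}) := by
          rw [← mul_assoc, e, one_mul]
      _ ≤ _ := by gcongr
  calc ∫⁻ x, extO Φ (maximal ρ μ h x) ∂μ
      ≤ ∫⁻ x, ∑' k : ℤ, (E k).indicator (fun _ => c k) x ∂μ := by
        apply lintegral_mono
        intro x
        refine (pw1 hΦ _).trans ?_
        apply ENNReal.tsum_le_tsum
        intro k
        split_ifs with hx
        · rw [indicator_of_mem (subset_toMeasurable μ _ hx)]
        · exact zero_le
    _ = ∑' k : ℤ, c k * μ (E k) := by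
        rw [lintegral_tsum (fun k => (measurable_const.indicator
          (measurableSet_toMeasurable _ _)).aemeasurable)]
        congr 1; ext k
        rw [lintegral_indicator_const (measurableSet_toMeasurable _ _)]
    _ ≤ ∑' k : ℤ, c k * (ENNReal.ofReal ((2:ℝ) ^ (1-k)) * (A * ∫⁻ x, hk k x ∂μ)) := by
        gcongr with k; exact hmu k
    _ = A * ∑' k : ℤ, ∫⁻ x, ENNReal.ofReal (Φ (2 ^ (k + 1)) * 2 ^ (1 - k)) * hk k x ∂μ := by
        rw [← ENNReal.tsum_mul_left]
        congr 1; ext k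
        rw [lintegral_const_mul _ (hkm k), ENNReal.ofReal_mul' (by positivity)]
        ring
    _ = A * ∫⁻ x, ∑' k : ℤ, ENNReal.ofReal (Φ (2 ^ (k + 1)) * 2 ^ (1 - k)) * hk k x ∂μ := by
        rw [lintegral_tsum (fun k => ((hkm k).const_mul _).aemeasurable)]
    _ ≤ A * ∫⁻ x, C * extO Φ (h x) ∂μ := by
        gcongr with x; exact hC (h x)
    _ = _ := by rw [lintegral_const_mul' _ _ hCt, mul_assoc]

lemma conv_scale {Φ : ℝ → ℝ} (hΦ : OrliczFun Φ) (hc : ConvexOn ℝ (Set.Ici (0:ℝ)) Φ)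
    {t D : ℝ} (ht : 0 ≤ t) (hD : 1 ≤ D) : Φ (t / D) ≤ Φ t / D := by
  have hD0 : 0 < D := by linarith
  have h1 : (0:ℝ) ≤ 1 / D := by positivity
  have h2 : (0:ℝ) ≤ 1 - 1 / D := by rw [sub_nonneg, div_le_one hD0]; exact hD
  have := hc.2 (mem_Ici.2 ht) (mem_Ici.2 (le_refl (0:ℝ))) h1 h2 (by ring)
  simp only [smul_eq_mul, mul_zero, add_zero, hΦ.zero] at this
  rw [one_div_mul_eq_div, one_div_mul_eq_div] at this
  exact this

lemma extO_scale {Φ : ℝ → ℝ} (hΦ : OrliczFun Φ) (hc : ConvexOn ℝ (Set.Ici (0:ℝ)) Φ)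
    (v : ℝ≥0∞) {D : ℝ} (hD : 1 ≤ D) :
    extO Φ (v / ENNReal.ofReal D) ≤ (ENNReal.ofReal D)⁻¹ * extO Φ v := by
  have hD0 : 0 < D := by linarith
  by_cases hv : v = ∞
  · subst hv
    have : extO Φ ∞ = ∞ := by simp [extO]
    rw [this, ENNReal.mul_top (by simp)]
    exact le_top
  lift v to ℝ≥0 using hv
  have hv' : (v : ℝ≥0∞) = ENNReal.ofReal (v:ℝ) := by simp
  rw [hv', ← ENNReal.ofReal_div_of_pos hD0, extO_ofReal (by positivity), extO_ofReal v.coe_nonneg,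
    mul_comm, ← div_eq_mul_inv, ← ENNReal.ofReal_div_of_pos hD0]
  exact ENNReal.ofReal_le_ofReal (conv_scale hΦ hc v.coe_nonneg hD)

lemma tangent {Φ : ℝ → ℝ} (hΦ : OrliczFun Φ) (hc : ConvexOn ℝ (Set.Ici (0:ℝ)) Φ)
    {a : ℝ} (ha : 0 < a) (v : ℝ≥0∞) :
    v ≤ ENNReal.ofReal a + ENNReal.ofReal (a / Φ a) * extO Φ v := by
  have hp := hΦ.pos a ha
  by_cases hv : v = ∞
  · subst hv
    have : extO Φ ∞ = ∞ := by simp [extO]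
    rw [this, ENNReal.mul_top (by simpa using by positivity)]
    simp
  lift v to ℝ≥0 using hv
  have hv' : (v : ℝ≥0∞) = ENNReal.ofReal (v:ℝ) := by simp
  have hn := hΦ.nonneg v v.coe_nonneg
  rw [hv', extO_ofReal v.coe_nonneg, ← ENNReal.ofReal_mul (by positivity),
    ← ENNReal.ofReal_add ha.le (by positivity)]
  apply ENNReal.ofReal_le_ofReal
  generalize hw : (v:ℝ) = w at *
  rcases le_total w a with h | h
  · have : 0 ≤ a / Φ a * Φ w := by positivity
    linarith
  · have hw0 : 0 < w := ha.trans_le h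
    have := conv_scale hΦ hc hw0.le ((one_le_div ha).2 h)
    rw [div_div_cancel₀ hw0.ne'] at this
    have h2 : w ≤ a / Φ a * Φ w := by
      rw [div_mul_eq_mul_div, le_div_iff₀ hp]
      rw [div_div_eq_mul_div, le_div_iff₀ hw0] at this
      linarith
    linarith

lemma exists_val {Φ : ℝ → ℝ} (hΦ : OrliczFun Φ) (hc : ConvexOn ℝ (Set.Ici (0:ℝ)) Φ)
    {N : ℝ} (hN : 0 < N) : ∃ a, 0 < a ∧ Φ a = N := by
  have hcont : ContinuousOn Φ (Set.Ioi 0) :=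
    (hc.subset Ioi_subset_Ici_self (convex_Ioi 0)).continuousOn isOpen_Ioi
  obtain ⟨T, hT⟩ := (hΦ.tendsto_atTop.eventually_ge_atTop N).exists_forall_of_atTop
  set D : ℝ := max 1 (Φ 1 / N) with hD
  have hD1 : 1 ≤ D := le_max_left _ _
  have hD0 : 0 < D := by linarith
  have h1 := conv_scale hΦ hc zero_le_one hD1
  have h2 : Φ 1 / D ≤ N := by
    rw [div_le_iff₀ hD0]
    have : Φ 1 / N ≤ D := le_max_right _ _
    rw [div_le_iff₀ hN] at this
    linarith
  have hd : 0 < 1 / D := by positivity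
  have hle : 1 / D ≤ max T (1 / D) := le_max_right _ _
  obtain ⟨a, ha, hav⟩ := intermediate_value_Icc hle
    (hcont.mono (fun x hx => lt_of_lt_of_le hd hx.1)) ⟨h1.trans h2, hT _ (le_max_left _ _)⟩
  exact ⟨a, lt_of_lt_of_le hd ha.1, hav⟩

lemma phi_far {ρ : X → X → ℝ} {μ : Measure X} {K₀ : ℝ} {L : ℝ≥0∞}
    (hX : IsQuasiMetricMeasure ρ μ K₀) (hL : IsDoubling ρ μ L)
    {φ : X → ℝ → ℝ} (hφG : Gdec1 ρ μ φ) (hφN : Nearness ρ φ) :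
    ∃ B : ℝ≥0∞, B ≠ ∞ ∧ ∀ x z y r s, 0 < r → r < s → y ∈ ball ρ x r → y ∈ ball ρ z s →
      ENNReal.ofReal (φ z s) ≤ B * ENNReal.ofReal (φ x r) := by
  obtain ⟨A, hA1, hAt, hA⟩ := doubling_const hL (2 * K₀)
  obtain ⟨Cg, hCg, hG⟩ := hφG
  obtain ⟨Cn, hCn, hN⟩ := hφN
  have hK := hX.one_le
  refine ⟨ENNReal.ofReal Cg * A * ENNReal.ofReal (Cn * Cg),
    by finiteness, fun x z y r s hr hrs hy1 hy2 => ?_⟩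
  have hs : 0 < s := hr.trans hrs
  have hy1 : ρ x y < r := hy1
  have hy2 : ρ z y < s := hy2
  have hsR : s ≤ 2 * K₀ * s := by nlinarith
  obtain ⟨g1, -, g3⟩ := hL.2.2 z s hs
  have h1 : ENNReal.ofReal (φ z s) ≤ ENNReal.ofReal Cg * A * ENNReal.ofReal (φ z (2 * K₀ * s)) := by
    rw [← ENNReal.mul_le_mul_iff_right g1.ne' g3.ne]
    calc _ ≤ _ := (hG z s (2 * K₀ * s) hs hsR).1
      _ ≤ ENNReal.ofReal Cg * ((A * μ (ball ρ z s)) * ENNReal.ofReal (φ z (2 * K₀ * s))) := by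
        gcongr; exact hA z s hs
      _ = _ := by ring
  have hzx : ρ z x ≤ 2 * K₀ * s := by
    have := hX.triangle z y x
    rw [hX.symm y x] at this
    nlinarith
  have h2 : φ z (2 * K₀ * s) ≤ Cn * Cg * φ x r := by
    calc _ ≤ Cn * φ x (2 * K₀ * s) := hN z x _ (by linarith) hzx
      _ ≤ Cn * (Cg * φ x r) := by
        gcongr; exact (hG x r (2 * K₀ * s) hr (by linarith)).2
      _ = _ := by ring
  calc _ ≤ _ := h1
    _ ≤ ENNReal.ofReal Cg * A * ENNReal.ofReal (Cn * Cg * φ x r) := by gcongr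
    _ = _ := by rw [ENNReal.ofReal_mul (p := Cn * Cg) (by positivity), mul_assoc _ (ENNReal.ofReal (Cn * Cg))]

lemma modular {ρ : X → X → ℝ} {μ : Measure X} {K₀ : ℝ} {L : ℝ≥0∞}
    (hX : IsQuasiMetricMeasure ρ μ K₀) (hL : IsDoubling ρ μ L)
    {φ : X → ℝ → ℝ} (hφpos : PhiPos φ) (hφG : Gdec1 ρ μ φ) (hφN : Nearness ρ φ)
    {Φ : ℝ → ℝ} (hΦ : OrliczFun Φ) (hc : ConvexOn ℝ (Set.Ici (0:ℝ)) Φ) {r₁ r₂ : ℝ} (hr₁ : 1 < r₁)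
    (hlt : LowerType Φ r₁) (hut : UpperType Φ r₂) :
    ∃ D : ℝ≥0∞, D ≠ ∞ ∧ ∀ g : X → ℝ≥0∞, Measurable g →
      (∀ x r, 0 < r → ∫⁻ y in ball ρ x r, extO Φ (g y) ∂μ ≤
        ENNReal.ofReal (φ x r) * μ (ball ρ x r)) →
      ∀ x r, 0 < r → ∫⁻ y in ball ρ x r, extO Φ (maximal ρ μ g y) ∂μ ≤
        D * (ENNReal.ofReal (φ x r) * μ (ball ρ x r)) := by
  obtain ⟨B, hBt, hB⟩ := phi_far hX hL hφG hφN
  obtain ⟨S, hSt, hS⟩ := strong_type hX hL hΦ hr₁ hlt hut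
  obtain ⟨A, hA1, hAt, hA⟩ := doubling_const hL (3 * K₀ ^ 2)
  obtain ⟨Cg, hCg, hG⟩ := hφG
  obtain ⟨D₂, hD₂, hD₂'⟩ := upper_const hΦ hut (2 + B.toReal)
    (by have := ENNReal.toReal_nonneg (a := B); linarith)
  have hK := hX.one_le
  refine ⟨S * (ENNReal.ofReal Cg * A) + ENNReal.ofReal D₂, by finiteness,
    fun g hg hmod x r hr => ?_⟩
  obtain ⟨a, ha, haN⟩ := exists_val hΦ hc (hφpos x r hr)
  set U := ball ρ x (3 * K₀ ^ 2 * r) with hU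
  have hUm : MeasurableSet U := hX.measurableSet_ball _ _
  have hB0 := ENNReal.toReal_nonneg (a := B)
  have hpt : ∀ y ∈ ball ρ x r, maximal ρ μ g y ≤
      max (maximal ρ μ (U.indicator g) y) (ENNReal.ofReal ((2 + B.toReal) * a)) := by
    intro y hy
    simp only [maximal, iSup_le_iff]
    intro z s hs hyz
    rcases le_or_gt s r with hsr | hsr
    · refine le_max_of_le_left ?_
      have hsub : ball ρ z s ⊆ U := by
        intro w hw
        have hw : ρ z w < s := hw
        have hy1 : ρ x y < r := hy
        have hy2 : ρ z y < s := hyz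
        show ρ x w < 3 * K₀ ^ 2 * r
        have t1 := hX.triangle x y w
        have t2 := hX.triangle y z w
        rw [hX.symm y z] at t2
        have t3 : ρ y w ≤ K₀ * (2 * r) := t2.trans (by gcongr; linarith)
        calc ρ x w ≤ K₀ * (ρ x y + ρ y w) := t1
          _ < K₀ * (K₀ * r + K₀ * (2 * r)) := by
            apply mul_lt_mul_of_pos_left _ (by linarith)
            nlinarith
          _ = _ := by ring
      have e : ∫⁻ y in ball ρ z s, g y ∂μ = ∫⁻ y in ball ρ z s, U.indicator g y ∂μ := by
        apply setLIntegral_congr_fun (hX.measurableSet_ball _ _)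
        intro w hw
        exact (indicator_of_mem (hsub hw) g).symm
      rw [e]
      exact le_iSup_of_le z (le_iSup_of_le s (le_iSup_of_le hs (le_iSup_of_le hyz le_rfl)))
    · refine le_max_of_le_right ?_
      obtain ⟨g1, -, g3⟩ := hL.2.2 z s hs
      apply ENNReal.div_le_of_le_mul
      have hp := hΦ.pos a ha
      calc ∫⁻ y in ball ρ z s, g y ∂μ
          ≤ ∫⁻ y in ball ρ z s, (ENNReal.ofReal a + ENNReal.ofReal (a / Φ a) * extO Φ (g y)) ∂μ := by
            gcongr with w; exact tangent hΦ hc ha _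
        _ = ENNReal.ofReal a * μ (ball ρ z s) +
            ENNReal.ofReal (a / Φ a) * ∫⁻ y in ball ρ z s, extO Φ (g y) ∂μ := by
            rw [lintegral_add_left measurable_const, lintegral_const, Measure.restrict_apply_univ,
              lintegral_const_mul' _ _ ENNReal.ofReal_ne_top]
        _ ≤ ENNReal.ofReal a * μ (ball ρ z s) +
            ENNReal.ofReal (a / Φ a) * ((B * ENNReal.ofReal (Φ a)) * μ (ball ρ z s)) := by
            gcongr
            refine (hmod z s hs).trans ?_
            gcongr
            rw [haN]
            exact hB x z y r s hr hsr hy hyz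
        _ = (ENNReal.ofReal a + B * (ENNReal.ofReal (a / Φ a) * ENNReal.ofReal (Φ a))) *
            μ (ball ρ z s) := by ring
        _ ≤ ENNReal.ofReal ((2 + B.toReal) * a) * μ (ball ρ z s) := by
            gcongr
            rw [← ENNReal.ofReal_mul (by positivity), div_mul_cancel₀ _ hp.ne']
            conv_lhs => rw [← ENNReal.ofReal_toReal hBt]
            rw [← ENNReal.ofReal_mul hB0, ← ENNReal.ofReal_add ha.le (by positivity)]
            apply ENNReal.ofReal_le_ofReal
            nlinarith
  calc ∫⁻ y in ball ρ x r, extO Φ (maximal ρ μ g y) ∂μ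
      ≤ ∫⁻ y in ball ρ x r, (extO Φ (maximal ρ μ (U.indicator g) y) +
          ENNReal.ofReal (D₂ * φ x r)) ∂μ := by
        apply setLIntegral_mono' (hX.measurableSet_ball _ _)
        intro y hy
        have h1 : extO Φ (ENNReal.ofReal ((2 + B.toReal) * a)) ≤ ENNReal.ofReal (D₂ * φ x r) := by
          rw [extO_ofReal (by positivity), ← haN]
          exact ENNReal.ofReal_le_ofReal (hD₂' a ha.le)
        refine (extO_mono hΦ (hpt y hy)).trans ?_
        rcases max_choice (maximal ρ μ (U.indicator g) y) (ENNReal.ofReal ((2 + B.toReal) * a))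
          with h | h <;> rw [h]
        · exact le_self_add
        · exact h1.trans le_add_self
    _ = (∫⁻ y in ball ρ x r, extO Φ (maximal ρ μ (U.indicator g) y) ∂μ) +
          ENNReal.ofReal (D₂ * φ x r) * μ (ball ρ x r) := by
        rw [lintegral_add_right _ measurable_const, lintegral_const, Measure.restrict_apply_univ]
    _ ≤ S * (∫⁻ y, extO Φ (U.indicator g y) ∂μ) +
          ENNReal.ofReal (D₂ * φ x r) * μ (ball ρ x r) := by
        gcongr
        exact (setLIntegral_le_lintegral _ _).trans (hS _ (hg.indicator hUm))
    _ = S * (∫⁻ y in U, extO Φ (g y) ∂μ) +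
          ENNReal.ofReal (D₂ * φ x r) * μ (ball ρ x r) := by
        congr 2
        rw [← lintegral_indicator hUm]
        congr 1; ext y
        by_cases hy : y ∈ U
        · simp [hy]
        · simp [hy, extO_zero hΦ]
    _ ≤ S * (ENNReal.ofReal (Cg * φ x r) * (A * μ (ball ρ x r))) +
          ENNReal.ofReal (D₂ * φ x r) * μ (ball ρ x r) := by
        gcongr
        refine (hmod x _ (by positivity)).trans ?_
        gcongr
        · exact (hG x r (3 * K₀ ^ 2 * r) hr (by
            have : 1 ≤ K₀ ^ 2 := one_le_pow₀ hK
            nlinarith)).2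
        · exact hA x r hr
    _ = _ := by
        rw [ENNReal.ofReal_mul (by positivity), ENNReal.ofReal_mul (by positivity)]; ring

lemma maximal_scale {ρ : X → X → ℝ} {μ : Measure X} (f : X → ℝ≥0∞) {l : ℝ≥0∞} (h0 : l ≠ 0)
    (ht : l ≠ ∞) (y : X) : maximal ρ μ f y ≤ l * maximal ρ μ (fun x => f x / l) y := by
  simp only [maximal, iSup_le_iff]
  intro z s hs hy
  have e : ∫⁻ y in ball ρ z s, f y ∂μ = l * ∫⁻ y in ball ρ z s, f y / l ∂μ := by
    rw [← lintegral_const_mul' _ _ ht]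
    congr 1; ext w
    rw [ENNReal.mul_div_cancel h0 ht]
  rw [e, mul_div_assoc]
  gcongr
  exact le_iSup_of_le z (le_iSup_of_le s (le_iSup_of_le hs (le_iSup_of_le hy le_rfl)))

theorem statement17 [Nonempty X] (ρ : X → X → ℝ) (μ : Measure X) (K₀ : ℝ) (L : ℝ≥0∞)
    (hX : IsQuasiMetricMeasure ρ μ K₀) (hL : IsDoubling ρ μ L)
    (φ : X → ℝ → ℝ) (hφpos : PhiPos φ) (hφG : Gdec1 ρ μ φ) (hφN : Nearness ρ φ)
    (Φ : ℝ → ℝ) (hΦ : OrliczFun Φ) (hΦmono : StrictMonoOn Φ (Set.Ici (0:ℝ)))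
    (hΦconv : ConvexOn ℝ (Set.Ici (0:ℝ)) Φ)
    (rminus rplus : ℝ) (hrm : 1 < rminus) (hrr : rminus ≤ rplus)
    (hlt : LowerType Φ rminus) (hut : UpperType Φ rplus) :
    ∃ C : ℝ≥0, 0 < C ∧ ∀ f : X → ℝ, Measurable f →
      OMnorm ρ μ Φ φ (fun x => ENNReal.ofReal |f x|) < ∞ →
      OMnorm ρ μ Φ φ (maximal ρ μ fun x => ENNReal.ofReal |f x|) ≤
        (C : ℝ≥0∞) * OMnorm ρ μ Φ φ (fun x => ENNReal.ofReal |f x|) := by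
  obtain ⟨D₀, hDt, hD₀⟩ := modular hX hL hφpos hφG hφN hΦ hΦconv hrm hlt hut
  set D : ℝ := max 1 D₀.toReal with hDdef
  have hD1 : 1 ≤ D := le_max_left _ _
  have hD0 : 0 < D := by linarith
  have hDD : D₀ ≤ ENNReal.ofReal D := by
    rw [← ENNReal.ofReal_toReal hDt]
    exact ENNReal.ofReal_le_ofReal (le_max_right _ _)
  have hDne : ENNReal.ofReal D ≠ 0 := by simpa using hD0
  refine ⟨D.toNNReal, by simpa using hD0, fun f hf hfin => ?_⟩
  change _ ≤ ENNReal.ofReal D * _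
  set F : X → ℝ≥0∞ := fun x => ENNReal.ofReal |f x| with hF
  have hFm : Measurable F := by
    simp only [hF]
    exact ENNReal.measurable_ofReal.comp (continuous_abs.measurable.comp hf)
  rw [mul_comm, ← ENNReal.div_le_iff hDne ENNReal.ofReal_ne_top]
  refine le_of_forall_gt_imp_ge_of_dense fun l hl => ?_
  rw [ENNReal.div_le_iff hDne ENNReal.ofReal_ne_top]
  by_cases hlt' : l = ∞
  · rw [hlt', ENNReal.top_mul hDne]; exact le_top
  have hl0 : l ≠ 0 := (lt_of_le_of_lt zero_le hl).ne'
  have hmod : ∀ x r, 0 < r → ∫⁻ y in ball ρ x r, extO Φ (F y / l) ∂μ ≤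
      ENNReal.ofReal (φ x r) * μ (ball ρ x r) := by
    intro x r hr
    have h1 : ballNorm ρ μ Φ φ x r F < l := by
      refine lt_of_le_of_lt ?_ hl
      exact le_iSup_of_le x (le_iSup_of_le r (le_iSup_of_le hr le_rfl))
    obtain ⟨l', ⟨hl'0, hl'⟩, hll⟩ := sInf_lt_iff.1 h1
    refine le_trans ?_ hl'
    apply lintegral_mono
    intro y
    exact extO_mono hΦ (ENNReal.div_le_div_left hll.le _)
  have hres := hD₀ (fun x => F x / l) (hFm.div_const l) hmod
  refine iSup_le fun x => iSup_le fun r => iSup_le fun hr => ?_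
  apply sInf_le
  refine ⟨mul_ne_zero hl0 hDne, ?_⟩
  calc ∫⁻ y in ball ρ x r, extO Φ (maximal ρ μ F y / (l * ENNReal.ofReal D)) ∂μ
      ≤ ∫⁻ y in ball ρ x r, (ENNReal.ofReal D)⁻¹ *
          extO Φ (maximal ρ μ (fun x => F x / l) y) ∂μ := by
        apply lintegral_mono
        intro y
        refine le_trans (extO_mono hΦ ?_) (extO_scale hΦ hΦconv _ hD1)
        apply ENNReal.div_le_of_le_mul
        refine (maximal_scale F hl0 hlt' y).trans (le_of_eq ?_)
        rw [mul_comm l (ENNReal.ofReal D), ← mul_assoc,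
          ENNReal.div_mul_cancel hDne ENNReal.ofReal_ne_top, mul_comm]
    _ = (ENNReal.ofReal D)⁻¹ *
          ∫⁻ y in ball ρ x r, extO Φ (maximal ρ μ (fun x => F x / l) y) ∂μ := by
        rw [lintegral_const_mul' _ _ (ENNReal.inv_ne_top.2 hDne)]
    _ ≤ (ENNReal.ofReal D)⁻¹ * (ENNReal.ofReal D *
          (ENNReal.ofReal (φ x r) * μ (ball ρ x r))) := by
        gcongr
        refine (hres x r hr).trans ?_
        gcongr
    _ = _ := by
        rw [← mul_assoc, ENNReal.inv_mul_cancel hDne ENNReal.ofReal_ne_top, one_mul]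
end Paper
end
end
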